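/- arXiv:0910.2061 — 7 statements merged into one kernel-verified Lean document; each statement's English description precedes it below -/
import Mathlib

section
/- Let X be a compact metric space, let Y ⊆ X be closed, and let n be a positive integer. Let f, g : X → ℤ≥0 be bounded functions with f lower semicontinuous, g upper semicontinuous, and f(x) ≥ g(x) for every x ∈ X. Let a ∈ M_n(C(Y)) be positive with g(y) ≤ rank(a(y)) ≤ f(y) for all y ∈ Y. Then there exist an open set U ⊇ Y and a positive element b of C_b(U, M_n(ℂ)) (bounded continuous M_n(ℂ)-valued functions on U) such that b restricted to Y equals a and g(z) ≤ rank(b(z)) ≤ f(z) for all z ∈ U. -/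
open scoped ComplexOrder

/-!
Extend `a` to a continuous Hermitian matrix function `A` on all of `X`. For a constant `t > 0`, the
cut-down `(A - t)₊` has rank at most `f` near `Y`: if `x` is close to `y ∈ Y`, then
`A x - t ≤ A y = a y`, an inequality `H ≤ M` with `H` Hermitian forces `rank H₊ ≤ rank M`, and `f`
does not drop near `y`. The neighbourhood shrinks as `t → 0`, so `t` is replaced by a continuous
function `ε` which vanishes on `Y` and is large wherever small constants fail; then `b = (A - ε)₊`
extends `a` and has rank at most `f` near `Y`. The bound `g ≤ rank b` near `Y` is automatic, as the
rank is lower and `g` upper semicontinuous.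
-/

open Filter Matrix Topology

section Semicontinuity

variable {α β : Type*} [TopologicalSpace α] [LinearOrder β] {f : α → β} {x : α}

theorem eventually_ge_of_lowerSemicontinuousAt [PredOrder β] (hf : LowerSemicontinuousAt f x) :
    ∀ᶠ z in 𝓝 x, f x ≤ f z := by
  by_cases hmin : IsMin (f x)
  · exact .of_forall fun z => hmin.isBot (f z)
  · filter_upwards [hf _ (Order.pred_lt_of_not_isMin hmin)] with z hz
    exact Order.le_of_pred_lt hz

theorem eventually_le_of_upperSemicontinuousAt [SuccOrder β] (hf : UpperSemicontinuousAt f x) :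
    ∀ᶠ z in 𝓝 x, f z ≤ f x := by
  by_cases hmax : IsMax (f x)
  · exact .of_forall fun z => hmax.isTop (f z)
  · filter_upwards [hf _ (Order.lt_succ_of_not_isMax hmax)] with z hz
    exact Order.le_of_lt_succ hz

end Semicontinuity

section Urysohn

variable {X : Type*} [TopologicalSpace X] [NormalSpace X] {Y : Set X}

theorem exists_continuousMap_eqOn_zero_le_of_notMem (hY : IsClosed Y) {κ : Type*} {V : κ → Set X}
    (hV : ∀ k, V k ∈ 𝓝ˢ Y) {c : κ → ℝ} (hc : ∀ k, 0 ≤ c k) (hcs : Summable c) :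
    ∃ ε : C(X, ℝ), Set.EqOn ε 0 Y ∧ (∀ x, 0 ≤ ε x) ∧ ∀ k, ∀ x ∉ V k, c k ≤ ε x := by
  have urysohn (k : κ) : ∃ χ : C(X, ℝ), Set.EqOn χ 0 Y ∧ Set.EqOn χ 1 (interior (V k))ᶜ ∧
      ∀ x, χ x ∈ Set.Icc (0 : ℝ) 1 :=
    exists_continuous_zero_one_of_isClosed hY isOpen_interior.isClosed_compl
      (Set.disjoint_compl_right_iff_subset.2 (subset_interior_iff_mem_nhdsSet.2 (hV k)))
  choose χ hχY hχV hχ using urysohn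
  have term_nonneg (k : κ) (x : X) : 0 ≤ c k * χ k x := mul_nonneg (hc k) (hχ k x).1
  have term_bound (k : κ) (x : X) : ‖c k * χ k x‖ ≤ c k := by
    rw [Real.norm_of_nonneg (term_nonneg k x)]
    exact mul_le_of_le_one_right (hc k) (hχ k x).2
  refine ⟨⟨fun x => ∑' k, c k * χ k x, continuous_tsum (fun k => by fun_prop) hcs term_bound⟩,
    fun y hy => ?_, fun x => tsum_nonneg fun k => term_nonneg k x, fun k x hx => ?_⟩
  · have term_zero (k : κ) : c k * χ k y = 0 := mul_eq_zero_of_right _ (hχY k hy)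
    simp [term_zero]
  · have hχ1 : χ k x = 1 := hχV k fun hxV => hx (interior_subset hxV)
    calc c k = c k * χ k x := by rw [hχ1, mul_one]
      _ ≤ ∑' j, c j * χ j x := (Summable.of_norm_bounded hcs fun j => term_bound j x).le_tsum k
          fun j _ => term_nonneg j x

theorem exists_continuousMap_eqOn_zero_eventually_mem (hY : IsClosed Y) {S : X → Set ℝ}
    (hSu : ∀ x, IsUpperSet (S x)) (hSc : ∀ x, IsClosed (S x))
    (hS : ∀ t > 0, ∀ᶠ x in 𝓝ˢ Y, t ∈ S x) :
    ∃ ε : C(X, ℝ), Set.EqOn ε 0 Y ∧ ∀ᶠ x in 𝓝ˢ Y, ε x ∈ S x := by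
  have hV (k : ℕ) : {x | (1 / 2 : ℝ) ^ k ∈ S x} ∈ 𝓝ˢ Y := hS _ (by positivity)
  -- The factor `2` pays for the gap between consecutive powers of `1 / 2`.
  obtain ⟨ε, hεY, hε0, hεV⟩ := exists_continuousMap_eqOn_zero_le_of_notMem hY hV
    (c := fun k => 2 * (1 / 2 : ℝ) ^ k) (fun k => by positivity) (summable_geometric_two.mul_left 2)
  refine ⟨ε, hεY, ?_⟩
  filter_upwards [hV 0] with x hx0
  by_cases hall : ∀ k : ℕ, (1 / 2 : ℝ) ^ k ∈ S x
  · have hlim : Tendsto (fun k : ℕ => (1 / 2 : ℝ) ^ k) atTop (𝓝 0) :=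
      tendsto_pow_atTop_nhds_zero_of_lt_one (by norm_num) (by norm_num)
    exact hSu x (hε0 x) ((hSc x).mem_of_tendsto hlim (.of_forall hall))
  · obtain ⟨k, hk, hk'⟩ : ∃ k : ℕ, (1 / 2 : ℝ) ^ k ∈ S x ∧ (1 / 2 : ℝ) ^ (k + 1) ∉ S x := by
      by_contra! hstep
      exact hall fun k => Nat.rec hx0 hstep k
    refine hSu x ?_ hk
    calc (1 / 2 : ℝ) ^ k = 2 * (1 / 2 : ℝ) ^ (k + 1) := by ring
      _ ≤ ε x := hεV (k + 1) x hk'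

end Urysohn

universe u v in
theorem tietzeExtension_selfAdjoint (A : Type v) [AddCommGroup A] [Module ℝ A] [StarAddMonoid A]
    [StarModule ℝ A] [TopologicalSpace A] [ContinuousAdd A] [ContinuousStar A]
    [ContinuousConstSMul ℝ A] [TietzeExtension.{u} A] :
    TietzeExtension.{u} (selfAdjoint A) :=
  .of_retract ⟨Subtype.val, continuous_subtype_val⟩
    ⟨selfAdjointPart ℝ, continuous_selfAdjointPart ℝ A⟩
    (ContinuousMap.ext fun a => a.2.selfAdjointPart_apply ℝ)

section CutDown

/-- The cut-down `(a - t)₊` of `a` at height `t`: the positive part, in the sense of functional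
calculus, of `a - t • 1`. It is meant for self-adjoint `a`. -/
noncomputable def cutDown {A : Type*} [Ring A] [Algebra ℝ A] [PosPart A] (a : A) (t : ℝ) : A :=
  (a - algebraMap ℝ A t)⁺

variable {A : Type*} [CStarAlgebra A]

theorem isSelfAdjoint_sub_algebraMap {a : A} (ha : IsSelfAdjoint a) (t : ℝ) :
    IsSelfAdjoint (a - algebraMap ℝ A t) :=
  ha.sub (.algebraMap A (.all t))

theorem continuous_cutDown {X : Type*} [TopologicalSpace X] {a : X → A} {t : X → ℝ}
    (ha : Continuous a) (ha' : ∀ x, IsSelfAdjoint (a x)) (ht : Continuous t) :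
    Continuous fun x => cutDown (a x) (t x) :=
  Continuous.cfcₙ_of_mem_nhdsSet (s := Set.univ) (·⁺) univ_mem
    (ha.sub ((continuous_algebraMap ℝ A).comp ht))
    fun x => isSelfAdjoint_sub_algebraMap (ha' x) (t x)

variable [PartialOrder A] [StarOrderedRing A]

theorem cutDown_nonneg (a : A) (t : ℝ) : 0 ≤ cutDown a t :=
  CFC.posPart_nonneg _

theorem cutDown_zero {a : A} (ha : 0 ≤ a) : cutDown a 0 = a := by
  rw [cutDown, map_zero, sub_zero, CFC.posPart_eq_self a |>.2 ha]

theorem sub_algebraMap_le_of_norm_sub_le {a b : A} (ha : IsSelfAdjoint a) (hb : IsSelfAdjoint b)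
    {t : ℝ} (h : ‖a - b‖ ≤ t) : a - algebraMap ℝ A t ≤ b := by
  have hab : a - b ≤ algebraMap ℝ A t :=
    (ha.sub hb).le_algebraMap_norm_self.trans (algebraMap_mono A h)
  exact sub_le_comm.1 hab

end CutDown

section Rank

theorem rank_le_rank_of_disjoint_range_ker {l m n K : Type*} [Fintype m] [Fintype n] [Field K]
    {M : Matrix l m K} {P : Matrix m n K}
    (h : Disjoint P.mulVecLin.range M.mulVecLin.ker) : P.rank ≤ M.rank := by
  have hdim := Submodule.finrank_add_finrank_le_of_disjoint h
  have hM := M.mulVecLin.finrank_range_add_finrank_ker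
  rw [Matrix.rank, Matrix.rank]
  lia

theorem isOpen_setOfPred_le_matrix_rank {m n 𝕜 : Type*} [Finite m] [Fintype n]
    [NontriviallyNormedField 𝕜] [CompleteSpace 𝕜] (k : ℕ) :
    IsOpen {A : Matrix m n 𝕜 | k ≤ A.rank} := by
  classical
  have := Fintype.ofFinite m
  let L : Matrix m n 𝕜 →ₗ[𝕜] (n → 𝕜) →L[𝕜] (m → 𝕜) :=
    LinearMap.toContinuousLinearMap.toLinearMap ∘ₗ Matrix.toLin'.toLinearMap
  have hL : Continuous L := L.continuous_of_finiteDimensional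
  have hrank (A : Matrix m n 𝕜) :
      k ≤ (L A : (n → 𝕜) →ₗ[𝕜] (m → 𝕜)).rank ↔ k ≤ A.rank := by
    have hLA : (L A : (n → 𝕜) →ₗ[𝕜] (m → 𝕜)) = A.mulVecLin := by ext; simp [L]
    rw [hLA, LinearMap.rank, Matrix.rank, ← Module.finrank_eq_rank, Nat.cast_le]
  have hopen := (isOpen_setOfPred_nat_le_rank k).preimage hL
  simpa only [Set.preimage_ofPred_eq, hrank] using hopen

theorem lowerSemicontinuous_matrix_rank {m n 𝕜 : Type*} [Finite m] [Fintype n]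
    [NontriviallyNormedField 𝕜] [CompleteSpace 𝕜] :
    LowerSemicontinuous (Matrix.rank : Matrix m n 𝕜 → ℕ) :=
  lowerSemicontinuous_iff_isOpen_preimage.2 fun k => isOpen_setOfPred_le_matrix_rank (k + 1)

variable {ι : Type*} [Fintype ι] [DecidableEq ι]

open scoped MatrixOrder in
theorem rank_posPart_le_of_le {𝕜 : Type*} [RCLike 𝕜] {H M : Matrix ι ι 𝕜} (hH : H.IsHermitian)
    (hHM : H ≤ M) : H⁺.rank ≤ M.rank := by
  have hP : H⁺.PosSemidef := Matrix.nonneg_iff_posSemidef.1 (CFC.posPart_nonneg H)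
  have hHP : H * H⁺ = H⁺ * H⁺ := by
    conv_lhs => enter [1]; rw [← CFC.posPart_sub_negPart H hH]
    rw [sub_mul, CFC.negPart_mul_posPart, sub_zero]
  refine rank_le_rank_of_disjoint_range_ker (Submodule.disjoint_def.2 ?_)
  rintro _ ⟨u, rfl⟩ hMv
  simp only [Matrix.mulVecLin_apply, LinearMap.mem_ker] at hMv ⊢
  set v := H⁺ *ᵥ u with hv
  have hHv : H *ᵥ v = H⁺ *ᵥ v := by rw [hv, Matrix.mulVec_mulVec, hHP, Matrix.mulVec_mulVec]
  have hquad : star v ⬝ᵥ H⁺ *ᵥ v = 0 := by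
    refine le_antisymm ?_ (hP.dotProduct_mulVec_nonneg v)
    have hle := (Matrix.le_iff.1 hHM).dotProduct_mulVec_nonneg v
    rwa [Matrix.sub_mulVec, hMv, zero_sub, hHv, dotProduct_neg, neg_nonneg] at hle
  have hPv : (H⁺ᴴ * H⁺) *ᵥ u = 0 := by
    rw [hP.isHermitian.eq, ← Matrix.mulVec_mulVec]
    exact (hP.dotProduct_mulVec_zero_iff v).1 hquad
  exact (Matrix.conjTranspose_mul_self_mulVec_eq_zero H⁺ u).1 hPv

open scoped Matrix.Norms.L2Operator MatrixOrder

theorem antitone_rank_cutDown {A : Matrix ι ι ℂ} (hA : A.IsHermitian) :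
    Antitone fun t => (cutDown A t).rank := by
  intro s t hst
  exact rank_posPart_le_of_le (isSelfAdjoint_sub_algebraMap hA t)
    ((sub_le_sub_left (algebraMap_mono _ hst) A).trans
      (CFC.le_posPart (isSelfAdjoint_sub_algebraMap hA s)))

theorem eventually_rank_cutDown_le {B : Matrix ι ι ℂ} (hB : B.IsHermitian) {t : ℝ} (ht : 0 < t) :
    ∀ᶠ A in 𝓝 B, A.IsHermitian → (cutDown A t).rank ≤ B.rank := by
  filter_upwards [Metric.closedBall_mem_nhds B ht] with A hAB hA
  exact rank_posPart_le_of_le (isSelfAdjoint_sub_algebraMap hA t)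
    (sub_algebraMap_le_of_norm_sub_le hA hB (mem_closedBall_iff_norm.1 hAB))

theorem isClosed_setOfPred_rank_cutDown_le {A : Matrix ι ι ℂ} (hA : A.IsHermitian) (m : ℕ) :
    IsClosed {t | (cutDown A t).rank ≤ m} :=
  (lowerSemicontinuous_matrix_rank.comp
    (continuous_cutDown continuous_const (fun _ => hA) continuous_id)).isClosed_preimage m

end Rank

section Extension

variable {X ι : Type*} [TopologicalSpace X] {Y : Set X}

theorem exists_norm_entry_le {K m n E : Type*} [TopologicalSpace K] [CompactSpace K] [Finite m]
    [Finite n] [SeminormedAddCommGroup E] (a : C(K, Matrix m n E)) :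
    ∃ C : ℝ, ∀ z i j, ‖a z i j‖ ≤ C := by
  have hbound (p : m × n) : ∃ C : ℝ, ∀ z, ‖a z p.1 p.2‖ ≤ C := by
    simpa using isCompact_univ.exists_bound_of_continuousOn
      (a.continuous.matrix_elem p.1 p.2).continuousOn
  choose c hc using hbound
  obtain ⟨C, hC⟩ := Finite.exists_le c
  exact ⟨C, fun z i j => (hc (i, j) z).trans (hC (i, j))⟩

theorem eventually_norm_entry_lt {m n E : Type*} [Finite m] [Finite n] [SeminormedAddCommGroup E]
    {b : X → Matrix m n E} {x : X} (hb : ContinuousAt b x) {C : ℝ} (hC : ∀ i j, ‖b x i j‖ < C) :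
    ∀ᶠ z in 𝓝 x, ∀ i j, ‖b z i j‖ < C :=
  eventually_all.2 fun i => eventually_all.2 fun j =>
    (tendsto_pi_nhds.1 (tendsto_pi_nhds.1 hb i) j).norm.eventually_lt_const (hC i j)

theorem exists_isHermitian_extension [NormalSpace X] [Finite ι] (hY : IsClosed Y)
    (a : C(Y, Matrix ι ι ℂ)) (ha : ∀ y, (a y).IsHermitian) :
    ∃ A : C(X, Matrix ι ι ℂ), (∀ x, (A x).IsHermitian) ∧ ∀ y : Y, A y = a y := by
  have : TietzeExtension (Matrix ι ι ℂ) := .of_tvs ℂ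
  have := tietzeExtension_selfAdjoint (Matrix ι ι ℂ)
  obtain ⟨A, hA⟩ := ContinuousMap.exists_restrict_eq hY
    (⟨fun y => ⟨a y, ha y⟩, by fun_prop⟩ : C(Y, selfAdjoint (Matrix ι ι ℂ)))
  exact ⟨⟨fun x => (A x : Matrix ι ι ℂ), by fun_prop⟩, fun x => (A x).2,
    fun y => congrArg Subtype.val (DFunLike.congr_fun hA y)⟩

theorem exists_posSemidef_extension_rank_le [NormalSpace X] [Fintype ι] (hY : IsClosed Y)
    (a : C(Y, Matrix ι ι ℂ)) (ha : ∀ y, (a y).PosSemidef) {f : X → ℕ}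
    (hf : ∀ y ∈ Y, LowerSemicontinuousAt f y) (haf : ∀ y : Y, (a y).rank ≤ f y) :
    ∃ b : C(X, Matrix ι ι ℂ), (∀ x, (b x).PosSemidef) ∧ (∀ y : Y, b y = a y) ∧
      ∀ᶠ x in 𝓝ˢ Y, (b x).rank ≤ f x := by
  classical
  obtain ⟨A, hA, hAY⟩ := exists_isHermitian_extension hY a fun y => (ha y).isHermitian
  have hrank (t : ℝ) (ht : t > 0) : ∀ᶠ x in 𝓝ˢ Y, (cutDown (A x) t).rank ≤ f x := by
    refine eventually_nhdsSet_iff_forall.2 fun y hy => ?_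
    filter_upwards [A.continuous.continuousAt.eventually (eventually_rank_cutDown_le (hA y) ht),
      eventually_ge_of_lowerSemicontinuousAt (hf y hy)] with x hAx hfx
    calc (cutDown (A x) t).rank ≤ (A y).rank := hAx (hA x)
      _ = (a ⟨y, hy⟩).rank := by rw [← hAY ⟨y, hy⟩]
      _ ≤ f y := haf ⟨y, hy⟩
      _ ≤ f x := hfx
  obtain ⟨ε, hεY, hε⟩ := exists_continuousMap_eqOn_zero_eventually_mem hY
    (S := fun x => {t | (cutDown (A x) t).rank ≤ f x})
    (fun x _ _ hst hs => (antitone_rank_cutDown (hA x) hst).trans hs)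
    (fun x => isClosed_setOfPred_rank_cutDown_le (hA x) (f x)) hrank
  refine ⟨⟨fun x => cutDown (A x) (ε x), ?_⟩, fun x => ?_, fun y => ?_, hε⟩
  · open scoped Matrix.Norms.L2Operator in
    exact continuous_cutDown A.continuous hA ε.continuous
  · open scoped Matrix.Norms.L2Operator MatrixOrder in
    exact Matrix.nonneg_iff_posSemidef.1 (cutDown_nonneg (A x) (ε x))
  · open scoped Matrix.Norms.L2Operator MatrixOrder in
    simp [hεY y.2, hAY, cutDown_zero (ha y).nonneg]

theorem eventually_le_rank_of_upperSemicontinuousAt {m n 𝕜 : Type*} [Finite m] [Fintype n]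
    [NontriviallyNormedField 𝕜] [CompleteSpace 𝕜] {b : X → Matrix m n 𝕜} {g : X → ℕ} {x : X}
    (hb : ContinuousAt b x) (hg : UpperSemicontinuousAt g x) (hgb : g x ≤ (b x).rank) :
    ∀ᶠ z in 𝓝 x, g z ≤ (b z).rank := by
  filter_upwards [eventually_le_of_upperSemicontinuousAt hg,
    hb.eventually (eventually_ge_of_lowerSemicontinuousAt (lowerSemicontinuous_matrix_rank (b x)))]
    with z hgz hbz
  exact hgz.trans (hgb.trans hbz)

theorem stmt6_general [NormalSpace X] [Fintype ι] (hY : IsClosed Y) {f g : X → ℕ}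
    (hf : ∀ y ∈ Y, LowerSemicontinuousAt f y) (hg : ∀ y ∈ Y, UpperSemicontinuousAt g y)
    (a : C(Y, Matrix ι ι ℂ)) (hbdd : ∃ C : ℝ, ∀ y i j, ‖a y i j‖ ≤ C)
    (ha : ∀ y, (a y).PosSemidef)
    (harank : ∀ y : Y, g y ≤ (a y).rank ∧ (a y).rank ≤ f y) :
    ∃ (U : Set X) (hYU : Y ⊆ U), IsOpen U ∧
      ∃ b : C(U, Matrix ι ι ℂ),
        (∃ C : ℝ, ∀ (z : U) (i j : ι), ‖b z i j‖ ≤ C) ∧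
        (∀ z : U, (b z).PosSemidef) ∧
        (∀ (y : X) (hy : y ∈ Y), b ⟨y, hYU hy⟩ = a ⟨y, hy⟩) ∧
        (∀ z : U, g z ≤ (b z).rank ∧ (b z).rank ≤ f z) := by
  obtain ⟨b, hb, hbY, hbf⟩ :=
    exists_posSemidef_extension_rank_le hY a ha hf fun y => (harank y).2
  obtain ⟨C, hC⟩ := hbdd
  have hbg : ∀ᶠ x in 𝓝ˢ Y, g x ≤ (b x).rank :=
    eventually_nhdsSet_iff_forall.2 fun y hy =>
      eventually_le_rank_of_upperSemicontinuousAt b.continuous.continuousAt (hg y hy)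
        ((harank ⟨y, hy⟩).1.trans_eq (by rw [← hbY ⟨y, hy⟩]))
  have hbC : ∀ᶠ x in 𝓝ˢ Y, ∀ i j, ‖b x i j‖ < C + 1 := by
    refine eventually_nhdsSet_iff_forall.2 fun y hy =>
      eventually_norm_entry_lt b.continuous.continuousAt fun i j => ?_
    rw [hbY ⟨y, hy⟩]
    exact (hC ⟨y, hy⟩ i j).trans_lt (lt_add_one C)
  obtain ⟨U, hU, hYU, hUb⟩ := mem_nhdsSet_iff_exists.1 (hbC.and (hbg.and hbf))
  exact ⟨U, hYU, hU, b.restrict U, ⟨C + 1, fun z i j => ((hUb z.2).1 i j).le⟩, fun z => hb z,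
    fun y hy => hbY ⟨y, hy⟩, fun z => (hUb z.2).2⟩

end Extension

/-- Extension of a positive matrix-valued function from a closed subset `Y` of a
compact metric space `X` to a bounded continuous positive function on an open neighbourhood
`U ⊇ Y`, with pointwise rank constrained between an upper semicontinuous `g` and a lower
semicontinuous `f`. -/
theorem stmt6 {X : Type*} [MetricSpace X] [CompactSpace X] (Y : Set X) (hY : IsClosed Y)
    (n : ℕ) (hn : 0 < n) (f g : X → ℕ)
    (hfbdd : ∃ C : ℕ, ∀ x, f x ≤ C) (hgbdd : ∃ C : ℕ, ∀ x, g x ≤ C)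
    (hf : LowerSemicontinuous f) (hg : UpperSemicontinuous g)
    (hfg : ∀ x, g x ≤ f x)
    (a : C(Y, Matrix (Fin n) (Fin n) ℂ)) (ha : ∀ y, (a y).PosSemidef)
    (harank : ∀ y : Y, g y.1 ≤ (a y).rank ∧ (a y).rank ≤ f y.1) :
    ∃ (U : Set X) (hYU : Y ⊆ U), IsOpen U ∧
      ∃ b : C(U, Matrix (Fin n) (Fin n) ℂ),
        (∃ C : ℝ, ∀ (z : U) (i j : Fin n), ‖b z i j‖ ≤ C) ∧
        (∀ z : U, (b z).PosSemidef) ∧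
        (∀ (y : X) (hy : y ∈ Y), b ⟨y, hYU hy⟩ = a ⟨y, hy⟩) ∧
        (∀ z : U, g z.1 ≤ (b z).rank ∧ (b z).rank ≤ f z.1) := by
  have := isCompact_iff_compactSpace.1 hY.isCompact
  exact stmt6_general hY (fun y _ => hf y) (fun y _ => hg y) a (exists_norm_entry_le a) ha harank
end

section
/- Let X be a compact metric space of finite covering dimension, let Y ⊆ X be closed, and let n be a positive integer. Let k, l ∈ ℕ satisfy k ≤ n and k − l ≥ 4·dim(X). Suppose a ∈ M_n(C(Y)) is positive and satisfies l ≤ rank(a(y)) ≤ k for all y ∈ Y. Then there is a positive element b ∈ M_n(C(X)) such that b restricted to Y equals a and l ≤ rank(b(x)) ≤ k for all x ∈ X. -/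
open scoped ComplexOrder

/-- `X` has Lebesgue covering dimension at most `d`: every open cover admits an open
refinement in which every point belongs to at most `d + 1` members. -/
def HasCovDimLE (X : Type*) [TopologicalSpace X] (d : ℕ) : Prop :=
  ∀ 𝒰 : Set (Set X), (∀ U ∈ 𝒰, IsOpen U) → ⋃₀ 𝒰 = Set.univ →
    ∃ 𝒱 : Set (Set X), (∀ V ∈ 𝒱, IsOpen V) ∧ ⋃₀ 𝒱 = Set.univ ∧
      (∀ V ∈ 𝒱, ∃ U ∈ 𝒰, V ⊆ U) ∧
      ∀ x : X, {V ∈ 𝒱 | x ∈ V}.Finite ∧ {V ∈ 𝒱 | x ∈ V}.ncard ≤ d + 1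

/-- `X` has Lebesgue covering dimension exactly `d`: `d` is the least natural number
such that `HasCovDimLE X d`. -/
def IsCovDim (X : Type*) [TopologicalSpace X] (d : ℕ) : Prop :=
  HasCovDimLE X d ∧ ∀ e : ℕ, HasCovDimLE X e → d ≤ e

/-!
For a Hermitian matrix `A` with ordered eigenvalues `λ₀ ≥ λ₁ ≥ …`, the spectral cut
`(A - λ_k)₊` is positive of rank at most `k`, depends continuously on `A` (by Weyl's inequality),
and is `A` itself if `A` is already positive of rank at most `k`. Its rank drops below `l ≤ k - p`
only if `λ_k` is an eigenvalue of multiplicity at least `p + 2`. The matrices of corank at least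
`p + 2` have codimension `(p + 2) ^ 2`, so those with such a multiple eigenvalue have codimension
`(p + 2) ^ 2 - 1`. If this exceeds `d`, a map from a `d`-dimensional space to the Hermitian matrices
can be perturbed to avoid them: replace it by a piecewise linear map on the nerve of a fine cover,
with vertices in general position. For a positive Tietze extension of `a`, the set to be avoided
stays away from the values near `Y`, so one can interpolate between the extension on `Y` and its
perturbation off a neighbourhood of `Y`, and then cut.
-/

section Weyl

variable {𝕜 E : Type*} [RCLike 𝕜] [NormedAddCommGroup E] [InnerProductSpace 𝕜 E]
  [FiniteDimensional 𝕜 E] {n : ℕ} {S T : E →ₗ[𝕜] E}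

theorem re_inner_apply_self_eq_sum_eigenvalues (hT : T.IsSymmetric)
    (hn : Module.finrank 𝕜 E = n) (x : E) :
    RCLike.re (inner 𝕜 x (T x)) =
      ∑ i, hT.eigenvalues hn i * ‖inner 𝕜 (hT.eigenvectorBasis hn i) x‖ ^ 2 := by
  have coord_apply (i : Fin n) : inner 𝕜 (hT.eigenvectorBasis hn i) (T x) =
      (hT.eigenvalues hn i : 𝕜) * inner 𝕜 (hT.eigenvectorBasis hn i) x := by
    rw [← hT, hT.apply_eigenvectorBasis, inner_smul_left, RCLike.conj_ofReal]
  rw [← (hT.eigenvectorBasis hn).sum_inner_mul_inner x (T x), map_sum]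
  refine Finset.sum_congr rfl fun i _ => ?_
  rw [coord_apply, ← inner_conj_symm x, mul_left_comm, RCLike.conj_mul, ← RCLike.ofReal_pow,
    ← RCLike.ofReal_mul, RCLike.ofReal_re]

theorem eigenvalues_mul_sq_norm_le_re_inner (hT : T.IsSymmetric) (hn : Module.finrank 𝕜 E = n)
    {j : Fin n} {x : E} (hx : ∀ i, j < i → inner 𝕜 (hT.eigenvectorBasis hn i) x = 0) :
    hT.eigenvalues hn j * ‖x‖ ^ 2 ≤ RCLike.re (inner 𝕜 x (T x)) := by
  rw [re_inner_apply_self_eq_sum_eigenvalues hT hn,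
    ← (hT.eigenvectorBasis hn).sum_sq_norm_inner_right x, Finset.mul_sum]
  refine Finset.sum_le_sum fun i _ => ?_
  rcases lt_or_ge j i with hji | hij
  · simp [hx i hji]
  · exact mul_le_mul_of_nonneg_right (hT.eigenvalues_antitone hn hij) (by positivity)

theorem re_inner_le_eigenvalues_mul_sq_norm (hT : T.IsSymmetric) (hn : Module.finrank 𝕜 E = n)
    {j : Fin n} {x : E} (hx : ∀ i, i < j → inner 𝕜 (hT.eigenvectorBasis hn i) x = 0) :
    RCLike.re (inner 𝕜 x (T x)) ≤ hT.eigenvalues hn j * ‖x‖ ^ 2 := by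
  rw [re_inner_apply_self_eq_sum_eigenvalues hT hn,
    ← (hT.eigenvectorBasis hn).sum_sq_norm_inner_right x, Finset.mul_sum]
  refine Finset.sum_le_sum fun i _ => ?_
  rcases lt_or_ge i j with hij | hji
  · simp [hx i hij]
  · exact mul_le_mul_of_nonneg_right (hT.eigenvalues_antitone hn hji) (by positivity)

/- The first `j` coordinates in one eigenbasis and the last `n - 1 - j` in the other are only
`n - 1` linear conditions. -/
theorem exists_ne_zero_inner_eq_zero (b b' : OrthonormalBasis (Fin n) 𝕜 E) (j : Fin n) :
    ∃ x : E, x ≠ 0 ∧ (∀ i, i < j → inner 𝕜 (b i) x = 0) ∧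
      ∀ i, j < i → inner 𝕜 (b' i) x = 0 := by
  let f : E →ₗ[𝕜] ({i : Fin n // i ≠ j} → 𝕜) :=
    LinearMap.pi fun i => (innerSL 𝕜 (if i.1 < j then b i.1 else b' i.1)).toLinearMap
  have finrank_lt : Module.finrank 𝕜 ({i : Fin n // i ≠ j} → 𝕜) < Module.finrank 𝕜 E := by
    have := j.pos
    simp only [Module.finrank_fintype_fun_eq_card, Fintype.card_subtype_compl,
      Fintype.card_fin, Fintype.card_unique, Module.finrank_eq_card_basis b.toBasis]
    omega
  obtain ⟨x, hfx, hx⟩ :=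
    (Submodule.ne_bot_iff _).1 (LinearMap.ker_ne_bot_of_finrank_lt finrank_lt (f := f))
  have coord_eq_zero (i : Fin n) (hi : i ≠ j) :
      inner 𝕜 (if i < j then b i else b' i) x = 0 := congrFun hfx ⟨i, hi⟩
  refine ⟨x, hx, fun i hi => ?_, fun i hi => ?_⟩
  · simpa [hi] using coord_eq_zero i hi.ne
  · simpa [hi.not_gt] using coord_eq_zero i hi.ne'

theorem eigenvalues_le_eigenvalues_add (hS : S.IsSymmetric) (hT : T.IsSymmetric)
    (hn : Module.finrank 𝕜 E = n) {c : ℝ}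
    (hc : ∀ x, RCLike.re (inner 𝕜 x (T x)) ≤ RCLike.re (inner 𝕜 x (S x)) + c * ‖x‖ ^ 2)
    (j : Fin n) : hT.eigenvalues hn j ≤ hS.eigenvalues hn j + c := by
  obtain ⟨x, hx, hSx, hTx⟩ :=
    exists_ne_zero_inner_eq_zero (hS.eigenvectorBasis hn) (hT.eigenvectorBasis hn) j
  refine le_of_mul_le_mul_right ?_ (show 0 < ‖x‖ ^ 2 by positivity)
  calc hT.eigenvalues hn j * ‖x‖ ^ 2
      ≤ RCLike.re (inner 𝕜 x (T x)) := eigenvalues_mul_sq_norm_le_re_inner hT hn hTx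
    _ ≤ RCLike.re (inner 𝕜 x (S x)) + c * ‖x‖ ^ 2 := hc x
    _ ≤ hS.eigenvalues hn j * ‖x‖ ^ 2 + c * ‖x‖ ^ 2 := by
        gcongr; exact re_inner_le_eigenvalues_mul_sq_norm hS hn hSx
    _ = (hS.eigenvalues hn j + c) * ‖x‖ ^ 2 := by ring

end Weyl

section OrderedEigenvalue

open scoped Matrix.Norms.L2Operator

variable {ι : Type*} [Fintype ι] [DecidableEq ι]

/-- The Hermitian complex matrices indexed by `ι`, as a real normed space with the operator
norm. -/
abbrev HermitianMatrix (ι : Type*) [Fintype ι] [DecidableEq ι] : Type _ :=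
  selfAdjoint (Matrix ι ι ℂ)

namespace HermitianMatrix

theorem isHermitian (A : HermitianMatrix ι) : A.1.IsHermitian := A.2

theorem isSelfAdjoint (A : HermitianMatrix ι) : IsSelfAdjoint A.1 := A.2

/-- The `j`-th largest eigenvalue of a Hermitian matrix, counted from `0` with multiplicity;
beyond the size of the matrix it is `0`, so that `spectralCut k` is then the positive part. -/
noncomputable def orderedEigenvalue (A : HermitianMatrix ι) (j : ℕ) : ℝ :=
  if h : j < Fintype.card ι then A.isHermitian.eigenvalues₀ ⟨j, h⟩ else 0

theorem orderedEigenvalue_le_of_le {i j : ℕ} (hij : i ≤ j) (hj : j < Fintype.card ι)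
    (A : HermitianMatrix ι) : A.orderedEigenvalue j ≤ A.orderedEigenvalue i := by
  simp only [orderedEigenvalue, hj, hij.trans_lt hj, dif_pos]
  exact A.isHermitian.eigenvalues₀_antitone hij

theorem re_inner_toEuclideanLin_le (A B : HermitianMatrix ι) (x : EuclideanSpace ℂ ι) :
    RCLike.re (inner ℂ x (Matrix.toEuclideanLin A.1 x)) ≤
      RCLike.re (inner ℂ x (Matrix.toEuclideanLin B.1 x)) + dist A B * ‖x‖ ^ 2 := by
  have apply_eq : Matrix.toEuclideanLin A.1 x = Matrix.toEuclideanLin B.1 x +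
      Matrix.toEuclideanCLM (𝕜 := ℂ) (A.1 - B.1) x := by
    simp [← Matrix.coe_toEuclideanCLM_eq_toEuclideanLin]
  have norm_le : ‖Matrix.toEuclideanCLM (𝕜 := ℂ) (A.1 - B.1) x‖ ≤ dist A B * ‖x‖ := by
    rw [Subtype.dist_eq, dist_eq_norm, Matrix.cstar_norm_def]
    exact ContinuousLinearMap.le_opNorm _ x
  rw [apply_eq, inner_add_right, map_add]
  gcongr
  calc RCLike.re (inner ℂ x (Matrix.toEuclideanCLM (𝕜 := ℂ) (A.1 - B.1) x))
      ≤ ‖x‖ * ‖Matrix.toEuclideanCLM (𝕜 := ℂ) (A.1 - B.1) x‖ :=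
        (RCLike.re_le_norm _).trans (norm_inner_le_norm _ _)
    _ ≤ ‖x‖ * (dist A B * ‖x‖) := by gcongr
    _ = dist A B * ‖x‖ ^ 2 := by ring

theorem lipschitzWith_orderedEigenvalue (j : ℕ) :
    LipschitzWith 1 fun A : HermitianMatrix ι => A.orderedEigenvalue j := by
  refine LipschitzWith.of_le_add fun A B => ?_
  by_cases hj : j < Fintype.card ι
  · simp only [orderedEigenvalue, hj, dif_pos]
    exact eigenvalues_le_eigenvalues_add _ _ _ (re_inner_toEuclideanLin_le A B) _
  · simp [orderedEigenvalue, hj, dist_nonneg]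

open Finset in
theorem rank_cfc (f : ℝ → ℝ) (A : HermitianMatrix ι) :
    (cfc f A.1).rank = #{j ∈ range (Fintype.card ι) | f (A.orderedEigenvalue j) ≠ 0} := by
  let U := A.isHermitian.eigenvectorUnitary
  have isUnit_det (V : unitary (Matrix ι ι ℂ)) : IsUnit (V : Matrix ι ι ℂ).det :=
    (Matrix.isUnit_iff_isUnit_det _).1 Unitary.isUnit_coe
  rw [A.isHermitian.cfc_eq, Matrix.IsHermitian.cfc, Unitary.conjStarAlgAut_apply,
    ← Unitary.coe_star, Matrix.rank_mul_eq_left_of_isUnit_det _ _ (isUnit_det (star U)),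
    Matrix.rank_mul_eq_right_of_isUnit_det _ _ (isUnit_det U), Matrix.rank_diagonal]
  rw [Fintype.card_subtype, card_filter, card_filter, sum_range]
  refine Fintype.sum_equiv (Fintype.equivOfCardEq (Fintype.card_fin _)).symm _ _ fun i => ?_
  simp [orderedEigenvalue, Matrix.IsHermitian.eigenvalues]

theorem cfc_sub_const (A : HermitianMatrix ι) (s : ℝ) :
    cfc (fun x : ℝ => x - s) A.1 = A.1 - s • (1 : Matrix ι ι ℂ) := by
  rw [cfc_sub (fun x => x) (fun _ => s) A.1, cfc_id' ℝ A.1 A.isSelfAdjoint,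
    cfc_const s A.1 A.isSelfAdjoint, Algebra.algebraMap_eq_smul_one]

open Finset in
theorem rank_sub_smul_one (A : HermitianMatrix ι) (s : ℝ) :
    (A - s • (1 : HermitianMatrix ι)).1.rank =
      #{j ∈ range (Fintype.card ι) | A.orderedEigenvalue j ≠ s} := by
  have coe_sub : (A - s • (1 : HermitianMatrix ι)).1 = cfc (fun x : ℝ => x - s) A.1 :=
    (cfc_sub_const A s).symm
  simp only [coe_sub, rank_cfc, sub_ne_zero]

theorem orderedEigenvalue_nonneg {A : HermitianMatrix ι} (hA : A.1.PosSemidef) (j : ℕ) :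
    0 ≤ A.orderedEigenvalue j := by
  by_cases hj : j < Fintype.card ι
  · have := hA.eigenvalues_nonneg (Fintype.equivOfCardEq (Fintype.card_fin _) ⟨j, hj⟩)
    simpa [orderedEigenvalue, hj, Matrix.IsHermitian.eigenvalues] using this
  · simp [orderedEigenvalue, hj]

theorem orderedEigenvalue_eq_zero_of_rank_le {A : HermitianMatrix ι} (hA : A.1.PosSemidef)
    {k : ℕ} (hk : A.1.rank ≤ k) : A.orderedEigenvalue k = 0 := by
  by_cases hkn : k < Fintype.card ι
  · by_contra hne
    have subset_filter : Finset.range (k + 1) ⊆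
        {j ∈ Finset.range (Fintype.card ι) | A.orderedEigenvalue j ≠ 0} := by
      intro j hj
      have hjk : j ≤ k := Nat.lt_succ_iff.1 (Finset.mem_range.1 hj)
      have := (orderedEigenvalue_nonneg hA k).lt_of_ne' hne
      exact Finset.mem_filter.2 ⟨Finset.mem_range.2 (hjk.trans_lt hkn),
        (this.trans_le (orderedEigenvalue_le_of_le hjk hkn A)).ne'⟩
    have card_le := Finset.card_le_card subset_filter
    rw [Finset.card_range, ← rank_cfc (fun x => x), cfc_id' ℝ A.1 A.isSelfAdjoint] at card_le
    omega
  · simp [orderedEigenvalue, hkn]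

/-- The positive part of `A - λ_k(A)`, where `λ_k(A)` is the `k`-th ordered eigenvalue: a
continuous retraction of the Hermitian matrices onto the positive ones of rank at most `k`. -/
noncomputable def spectralCut (k : ℕ) (A : HermitianMatrix ι) : HermitianMatrix ι :=
  ⟨cfc (fun x : ℝ => max x 0) (A - A.orderedEigenvalue k • (1 : HermitianMatrix ι)).1,
    cfc_predicate _ _⟩

theorem continuous_spectralCut (k : ℕ) :
    Continuous (spectralCut k : HermitianMatrix ι → HermitianMatrix ι) := by
  refine Continuous.subtype_mk (Continuous.cfc_of_mem_nhdsSet (s := Set.univ) _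
    Filter.univ_mem ?_ (fun A => (A - _ : HermitianMatrix ι).2) (by fun_prop)) _
  have := (lipschitzWith_orderedEigenvalue (ι := ι) k).continuous
  fun_prop

theorem posSemidef_spectralCut (k : ℕ) (A : HermitianMatrix ι) :
    (spectralCut k A).1.PosSemidef := by
  open scoped MatrixOrder in
  exact Matrix.nonneg_iff_posSemidef.1 (cfc_nonneg fun x _ => le_max_right x 0)

theorem coe_spectralCut (k : ℕ) (A : HermitianMatrix ι) :
    (spectralCut k A).1 = cfc (fun x : ℝ => max (x - A.orderedEigenvalue k) 0) A.1 := by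
  rw [cfc_comp' (fun x : ℝ => max x 0) (fun x : ℝ => x - A.orderedEigenvalue k) A.1
    (ha := A.isSelfAdjoint), cfc_sub_const]
  rfl

theorem spectralCut_eq_self {k : ℕ} {A : HermitianMatrix ι} (hA : A.1.PosSemidef)
    (hk : A.1.rank ≤ k) : spectralCut k A = A := by
  apply Subtype.ext
  rw [coe_spectralCut, orderedEigenvalue_eq_zero_of_rank_le hA hk]
  calc cfc (fun x : ℝ => max (x - 0) 0) A.1
      = cfc (fun x : ℝ => x) A.1 := by
        refine cfc_congr fun x hx => ?_
        rw [A.isHermitian.spectrum_real_eq_range_eigenvalues] at hx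
        obtain ⟨i, rfl⟩ := hx
        simpa using hA.eigenvalues_nonneg i
    _ = A.1 := cfc_id' ℝ A.1 A.isSelfAdjoint

open Finset in
theorem rank_spectralCut (k : ℕ) (A : HermitianMatrix ι) :
    (spectralCut k A).1.rank =
      #{j ∈ range (Fintype.card ι) | A.orderedEigenvalue k < A.orderedEigenvalue j} := by
  simp only [coe_spectralCut, rank_cfc, ne_eq, max_eq_right_iff, sub_nonpos, not_le]

theorem rank_spectralCut_le (k : ℕ) (A : HermitianMatrix ι) :
    (spectralCut k A).1.rank ≤ k := by
  conv_rhs => rw [← Finset.card_range k]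
  rw [rank_spectralCut]
  refine Finset.card_le_card fun j hj => ?_
  obtain ⟨hjn, hkj⟩ := Finset.mem_filter.1 hj
  by_contra hjk
  rw [Finset.mem_range, not_lt] at hjk
  exact hkj.not_ge (orderedEigenvalue_le_of_le hjk (Finset.mem_range.1 hjn) A)

/- Each of the `k + 1` largest eigenvalues survives the cut or equals the `k`-th one. -/
open Finset in
theorem add_rank_sub_le_rank_spectralCut_add {k : ℕ} (hk : k < Fintype.card ι)
    (A : HermitianMatrix ι) :
    k + 1 + (A - A.orderedEigenvalue k • (1 : HermitianMatrix ι)).1.rank ≤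
      (spectralCut k A).1.rank + Fintype.card ι := by
  let μ := A.orderedEigenvalue k
  have subset_union : range (k + 1) ⊆
      {j ∈ range (Fintype.card ι) | μ < A.orderedEigenvalue j} ∪
        {j ∈ range (Fintype.card ι) | A.orderedEigenvalue j = μ} := by
    intro j hj
    have hjk : j ≤ k := Nat.lt_succ_iff.1 (mem_range.1 hj)
    rw [← filter_or, mem_filter, mem_range]
    exact ⟨hjk.trans_lt hk, (orderedEigenvalue_le_of_le hjk hk A).lt_or_eq.imp_right Eq.symm⟩
  have card_le := (card_le_card subset_union).trans (card_union_le _ _)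
  have card_add :=
    card_filter_add_card_filter_not (s := range (Fintype.card ι)) (A.orderedEigenvalue · = μ)
  rw [rank_sub_smul_one, rank_spectralCut]
  simp only [card_range] at card_le card_add
  simp only [ne_eq, μ] at *
  omega

end HermitianMatrix

end OrderedEigenvalue

theorem isOpen_setOf_le_matrix_rank {𝕜 m n : Type*} [NontriviallyNormedField 𝕜] [CompleteSpace 𝕜]
    [Finite m] [Fintype n] (l : ℕ) : IsOpen {A : Matrix m n 𝕜 | l ≤ A.rank} := by
  classical
  cases nonempty_fintype m
  let toCLM : Matrix m n 𝕜 →ₗ[𝕜] (n → 𝕜) →L[𝕜] m → 𝕜 :=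
    LinearMap.toContinuousLinearMap.toLinearMap ∘ₗ Matrix.toLin'.toLinearMap
  have le_rank_iff (A : Matrix m n 𝕜) :
      (l : Cardinal) ≤ LinearMap.rank (toCLM A).toLinearMap ↔ l ≤ A.rank := by
    have : LinearMap.rank A.mulVecLin = A.rank := (Module.finrank_eq_rank _ _).symm
    simp [toCLM, Matrix.toLin'_apply', this]
  simpa only [Set.preimage_ofPred_eq, le_rank_iff] using
    (isOpen_setOfPred_nat_le_rank l).preimage toCLM.continuous_of_finiteDimensional

section RankFactorization

open Matrix

variable {m n K : Type*} [Field K]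

theorem exists_linearIndependent_row_span_eq [Finite m] (A : Matrix m n K) :
    ∃ s : Finset m, LinearIndependent K (A.submatrix ((↑) : s → m) id).row ∧
      Submodule.span K (Set.range (A.submatrix ((↑) : s → m) id).row) =
        Submodule.span K (Set.range A.row) := by
  obtain ⟨b, -, -, row_mem_span, rows_indep⟩ := exists_linearIndepOn_extension
    (linearIndepOn_empty K A.row) (Set.empty_subset Set.univ)
  lift b to Finset m using b.toFinite
  have range_row : Set.range (A.submatrix ((↑) : b → m) id).row = A.row '' b := by
    rw [Set.image_eq_range]; rfl
  refine ⟨b, rows_indep, le_antisymm (Submodule.span_mono ?_) (Submodule.span_le.2 ?_)⟩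
  · rw [range_row]
    exact Set.image_subset_range _ _
  · rwa [range_row, ← Set.image_univ]

variable [DecidableEq m]

theorem exists_eq_mul_submatrix [Finite m] [Fintype n] (A : Matrix m n K) :
    ∃ s : Finset m, s.card = A.rank ∧ ∃ C : Matrix m s K,
      C.submatrix ((↑) : s → m) id = 1 ∧ A = C * A.submatrix (↑) id := by
  obtain ⟨s, rows_indep, span_eq⟩ := exists_linearIndependent_row_span_eq A
  let R : Matrix s n K := A.submatrix (↑) id
  have row_mem (i : m) : ∃ c : s → K, ∑ k, c k • R.row k = A.row i := by
    rw [← Submodule.mem_span_range_iff_exists_fun, span_eq]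
    exact Submodule.subset_span ⟨i, rfl⟩
  choose C hC using row_mem
  have eq_mul : A = of C * R := by
    ext i j
    simpa [Matrix.mul_apply, Matrix.row] using (congrFun (hC i) j).symm
  refine ⟨s, ?_, of C, ?_, eq_mul⟩
  · rw [rank_eq_finrank_span_row, ← span_eq, finrank_span_eq_card rows_indep, Fintype.card_coe]
  · have mul_eq : (of C).submatrix ((↑) : s → m) id * R = (1 : Matrix s s K) * R :=
      calc (of C).submatrix ((↑) : s → m) id * R = (of C * R).submatrix (↑) id := rfl
        _ = (1 : Matrix s s K) * R := by rw [← eq_mul, Matrix.one_mul]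
    exact funext fun i => vecMul_injective_iff.2 rows_indep (congrFun mul_eq i)

/-- The matrix of a linear map `K^s → K^m` whose image is the graph of `X : K^s → K^(m \ s)`. -/
def graphMatrix (s : Finset m) (X : {i // i ∉ s} → s → K) : Matrix m s K :=
  of fun i j => if h : i ∈ s then (1 : Matrix s s K) ⟨i, h⟩ j else X ⟨i, h⟩ j

theorem exists_eq_graphMatrix_mul_mul_conjTranspose [Fintype m] [StarRing K] {A : Matrix m m K}
    (hA : A.IsHermitian) :
    ∃ s : Finset m, s.card = A.rank ∧ ∃ X : {i // i ∉ s} → s → K,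
      A = graphMatrix s X * A.submatrix ((↑) : s → m) (↑) * (graphMatrix s X)ᴴ := by
  obtain ⟨s, card_s, C, hCs, hCA⟩ := exists_eq_mul_submatrix A
  refine ⟨s, card_s, fun i => C i, ?_⟩
  have C_eq : graphMatrix s (fun i => C i) = C := by
    ext i j
    by_cases hi : i ∈ s
    · simp [graphMatrix, ← hCs]
    · simp [graphMatrix, hi]
  let P : Matrix s s K := A.submatrix (↑) (↑)
  have conjTranspose_P : Pᴴ = P := hA.submatrix _
  have columns_eq : A.submatrix id ((↑) : s → m) = C * P := by
    conv_lhs => rw [hCA]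
    rfl
  have rows_eq : A.submatrix ((↑) : s → m) id = P * Cᴴ := by
    have := congrArg conjTranspose columns_eq
    rwa [conjTranspose_mul, conjTranspose_submatrix, hA, conjTranspose_P] at this
  calc A = C * A.submatrix ((↑) : s → m) id := hCA
    _ = graphMatrix s (fun i => C i) * P * (graphMatrix s fun i => C i)ᴴ := by
        rw [rows_eq, Matrix.mul_assoc, C_eq]

end RankFactorization

section Codimension

open scoped Pointwise

theorem dimH_iUnion_lt {X κ : Type*} [EMetricSpace X] [Finite κ] {S : κ → Set X} {c : ENNReal}
    (hc : 0 < c) (hS : ∀ i, dimH (S i) < c) : dimH (⋃ i, S i) < c := by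
  cases nonempty_fintype κ
  rw [dimH_iUnion, ← Finset.sup_univ_eq_iSup, Finset.sup_lt_iff hc]
  exact fun i _ => hS i

variable {E : Type*} [NormedAddCommGroup E] [NormedSpace ℝ E] {Z : Set E} {m : ℕ}

/-- `Z` has codimension at least `m`: adding to `Z` any subspace of dimension less than `m` leaves
a set of less than full Hausdorff dimension. The sums with subspaces are part of the definition
since Hausdorff dimension is not additive on products. -/
def HasCodimGE (Z : Set E) (m : ℕ) : Prop :=
  ∀ W : Submodule ℝ E, Module.finrank ℝ W < m → dimH (Z + (W : Set E)) < Module.finrank ℝ E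

theorem HasCodimGE.mono {Z' : Set E} (hZ : HasCodimGE Z m) (h : Z' ⊆ Z) : HasCodimGE Z' m :=
  fun W hW => (dimH_mono (Set.add_subset_add_right h)).trans_lt (hZ W hW)

variable [FiniteDimensional ℝ E]

theorem HasCodimGE.iUnion [Nontrivial E] {κ : Type*} [Finite κ] {Z : κ → Set E}
    (hZ : ∀ i, HasCodimGE (Z i) m) : HasCodimGE (⋃ i, Z i) m := by
  intro W hW
  rw [Set.iUnion_add]
  exact dimH_iUnion_lt (mod_cast Module.finrank_pos (R := ℝ) (M := E)) fun i => hZ i W hW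

theorem hasCodimGE_range_of_contDiff {F : Type*} [NormedAddCommGroup F] [NormedSpace ℝ F]
    [FiniteDimensional ℝ F] {f : F → E} (hf : ContDiff ℝ 1 f)
    (hm : Module.finrank ℝ F + m ≤ Module.finrank ℝ E) : HasCodimGE (Set.range f) m := by
  intro W hW
  have range_add : Set.range f + (W : Set E) = Set.range fun p : F × W => f p.1 + p.2 := by
    ext z
    simp [Set.mem_add]
  have contDiff_add : ContDiff ℝ 1 fun p : F × W => f p.1 + p.2 :=
    (hf.comp contDiff_fst).add (W.subtypeL.contDiff.comp contDiff_snd)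
  rw [range_add]
  refine contDiff_add.dimH_range_le.trans_lt ?_
  rw [Module.finrank_prod]
  exact_mod_cast (Nat.add_lt_add_left hW _).trans_le hm

end Codimension

section CorankCodimension

open scoped Matrix.Norms.L2Operator

theorem finite_selfAdjoint (A : Type*) [AddCommGroup A] [Module ℂ A] [StarAddMonoid A]
    [StarModule ℂ A] [Module.Finite ℝ A] : Module.Finite ℝ (selfAdjoint A) :=
  inferInstanceAs (Module.Finite ℝ (selfAdjoint.submodule ℝ A))

theorem finrank_eq_two_mul_finrank_selfAdjoint (A : Type*) [AddCommGroup A] [Module ℂ A]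
    [StarAddMonoid A] [StarModule ℂ A] [Module.Finite ℝ A] :
    Module.finrank ℝ A = 2 * Module.finrank ℝ (selfAdjoint A) := by
  let e : A ≃ₗ[ℝ] selfAdjoint A × selfAdjoint A :=
    { toFun := fun z => (realPart z, imaginaryPart z)
      map_add' := fun x y => by simp
      map_smul' := fun c x => by simp
      invFun := fun p => p.1 + Complex.I • (p.2 : A)
      left_inv := fun z => realPart_add_I_smul_imaginaryPart z
      right_inv := fun p => by ext <;> simp }
  have := finite_selfAdjoint A
  rw [e.finrank_eq, Module.finrank_prod, two_mul]

theorem contDiff_matrix {E m : Type*} [NormedAddCommGroup E] [NormedSpace ℝ E] [Fintype m]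
    [DecidableEq m] {r : WithTop ℕ∞} {f : E → Matrix m m ℂ}
    (hf : ∀ i j, ContDiff ℝ r fun x => f x i j) : ContDiff ℝ r f := by
  let e : (m → m → ℂ) ≃L[ℝ] Matrix m m ℂ := (Matrix.ofLinearEquiv ℝ).toContinuousLinearEquiv
  exact e.contDiff.comp (contDiff_pi.2 fun i => contDiff_pi.2 fun j => hf i j)

namespace HermitianMatrix

variable {ι : Type*} [Fintype ι] [DecidableEq ι]

instance finiteDimensional : FiniteDimensional ℝ (HermitianMatrix ι) :=
  finite_selfAdjoint _

theorem finrank_eq : Module.finrank ℝ (HermitianMatrix ι) = Fintype.card ι ^ 2 := by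
  have h := finrank_eq_two_mul_finrank_selfAdjoint (Matrix ι ι ℂ)
  rw [Module.finrank_matrix, Complex.finrank_real_complex] at h
  linarith [sq (Fintype.card ι)]

open Matrix in
theorem contDiff_graphMatrix_mul_mul_conjTranspose (s : Finset ι) :
    ContDiff ℝ 1 fun p : ({i // i ∉ s} → s → ℂ) × HermitianMatrix s =>
      graphMatrix s p.1 * p.2.1 * (graphMatrix s p.1)ᴴ := by
  have contDiff_entry (i : ι) (j : s) :
      ContDiff ℝ 1 fun p : ({i // i ∉ s} → s → ℂ) × HermitianMatrix s =>
        graphMatrix s p.1 i j := by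
    by_cases hi : i ∈ s
    · simp only [graphMatrix, of_apply, hi, dif_pos]
      fun_prop
    · simp only [graphMatrix, of_apply, hi, dif_neg, not_false_eq_true]
      fun_prop
  have contDiff_coe (i j : s) : ContDiff ℝ 1 fun P : HermitianMatrix s => P.1 i j :=
    (((entryLinearMap ℝ ℂ i j).comp (selfAdjoint.submodule ℝ (Matrix s s ℂ)).subtype
      ).toContinuousLinearMap).contDiff
  refine contDiff_matrix fun i j => ?_
  simp only [mul_apply, conjTranspose_apply]
  refine ContDiff.sum fun k _ => (ContDiff.sum fun l _ => ?_).mul ?_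
  · exact (contDiff_entry i l).mul ((contDiff_coe l k).comp contDiff_snd)
  · exact Complex.conjCLE.contDiff.comp (contDiff_entry j k)

open Matrix in
/-- The Hermitian matrix with block `P` at the rows and columns in `s` whose remaining rows are
the combinations of these rows with coefficients `X`. The self-adjoint part is the identity on this
product and only serves to make it an element of `HermitianMatrix ι`. -/
noncomputable def graphHermitian (s : Finset ι)
    (p : ({i // i ∉ s} → s → ℂ) × HermitianMatrix s) : HermitianMatrix ι :=
  selfAdjointPart ℝ (graphMatrix s p.1 * p.2.1 * (graphMatrix s p.1)ᴴ)

theorem contDiff_graphHermitian (s : Finset ι) : ContDiff ℝ 1 (graphHermitian s) :=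
  (selfAdjointPart ℝ (A := Matrix ι ι ℂ)).toContinuousLinearMap.contDiff.comp
    (contDiff_graphMatrix_mul_mul_conjTranspose s)

theorem setOf_corank_ge_subset (r : ℕ) :
    {A : HermitianMatrix ι | A.1.rank + r ≤ Fintype.card ι} ⊆
      ⋃ s : {s : Finset ι // s.card + r ≤ Fintype.card ι}, Set.range (graphHermitian s.1) := by
  intro A hA
  obtain ⟨s, card_s, X, hX⟩ := exists_eq_graphMatrix_mul_mul_conjTranspose A.isHermitian
  let P : HermitianMatrix s := ⟨A.1.submatrix (↑) (↑), A.isHermitian.submatrix _⟩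
  have eq_coe : graphMatrix s X * P.1 * (graphMatrix s X).conjTranspose = A.1 := hX.symm
  refine Set.mem_iUnion.2 ⟨⟨s, card_s ▸ hA⟩, ⟨(X, P), Subtype.ext ?_⟩⟩
  simp only [graphHermitian, eq_coe]
  exact IsSelfAdjoint.coe_selfAdjointPart_apply ℝ A.isSelfAdjoint

theorem finrank_graphHermitian_domain_add_le {r : ℕ} {s : Finset ι}
    (hs : s.card + r ≤ Fintype.card ι) :
    Module.finrank ℝ (({i // i ∉ s} → s → ℂ) × HermitianMatrix s) + r ^ 2 ≤
      Module.finrank ℝ (HermitianMatrix ι) := by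
  obtain ⟨q, hq⟩ := Nat.exists_eq_add_of_le ((Nat.le_add_right _ _).trans hs)
  have card_compl : Fintype.card {i // i ∉ s} = q := by
    rw [Fintype.card_subtype_compl, Fintype.card_coe, hq, Nat.add_sub_cancel_left]
  have hrq : r ≤ q := by omega
  simp only [Module.finrank_prod, Module.finrank_pi_fintype, Complex.finrank_real_complex,
    Finset.sum_const, Finset.card_univ, smul_eq_mul, finrank_eq, card_compl, Fintype.card_coe, hq]
  calc q * (s.card * 2) + s.card ^ 2 + r ^ 2
      ≤ q * (s.card * 2) + s.card ^ 2 + q ^ 2 := by gcongr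
    _ = (s.card + q) ^ 2 := by ring

theorem hasCodimGE_setOf_corank_ge [Nonempty ι] (r : ℕ) :
    HasCodimGE {A : HermitianMatrix ι | A.1.rank + r ≤ Fintype.card ι} (r ^ 2) := by
  have : Nontrivial (HermitianMatrix ι) :=
    Module.nontrivial_of_finrank_pos (R := ℝ) (finrank_eq (ι := ι) ▸ pow_pos Fintype.card_pos 2)
  refine (HasCodimGE.iUnion fun s => ?_).mono (setOf_corank_ge_subset r)
  exact hasCodimGE_range_of_contDiff (contDiff_graphHermitian s.1)
    (finrank_graphHermitian_domain_add_le s.2)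

end HermitianMatrix

end CorankCodimension

section GeneralPosition

open scoped Pointwise

variable {E : Type*} [NormedAddCommGroup E] [NormedSpace ℝ E] {Z : Set E} {m : ℕ}

theorem HasCodimGE.exists_dist_lt_forall_notMem_add [FiniteDimensional ℝ E] (hZ : HasCodimGE Z m)
    {κ : Type*} [Finite κ] {W : κ → Submodule ℝ E} (hW : ∀ j, Module.finrank ℝ (W j) < m) (c : E)
    {ε : ℝ} (hε : 0 < ε) : ∃ v, dist c v < ε ∧ ∀ j, v ∉ Z + (W j : Set E) := by
  rcases isEmpty_or_nonempty κ with hκ | ⟨⟨j₀⟩⟩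
  · exact ⟨c, by simpa using hε, hκ.elim⟩
  have dimH_lt : dimH (⋃ j, Z + (W j : Set E)) < Module.finrank ℝ E :=
    dimH_iUnion_lt (bot_le.trans_lt (hZ _ (hW j₀))) fun j => hZ _ (hW j)
  obtain ⟨v, hv, hcv⟩ := (dense_compl_of_dimH_lt_finrank dimH_lt).exists_dist_lt c hε
  exact ⟨v, hcv, fun j hj => hv (Set.mem_iUnion.2 ⟨j, hj⟩)⟩

theorem smul_add_notMem (hZ : ∀ t : ℝ, t ≠ 0 → ∀ z ∈ Z, t • z ∈ Z) {W : Submodule ℝ E} {p x : E}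
    (hp : p ∉ Z + (W : Set E)) {t : ℝ} (ht : t ≠ 0) (hx : x ∈ W) : t • p + x ∉ Z := by
  intro hmem
  refine hp ⟨t⁻¹ • (t • p + x), hZ _ (inv_ne_zero ht) _ hmem, -(t⁻¹ • x),
    W.neg_mem (W.smul_mem _ hx), ?_⟩
  simp only [smul_add, inv_smul_smul₀ ht, add_neg_cancel_right]

variable {κ : Type*}

/-- The points `v i`, `i ∈ S`, are in general position relative to `Z` and `W`: a combination of
at least one and at most `d + 1` of them with nonzero coefficients is never congruent to a point of
`Z` modulo `W`. -/
def InGeneralPosition (Z : Set E) (W : Submodule ℝ E) (d : ℕ) (v : κ → E) (S : Finset κ) : Prop :=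
  ∀ T ⊆ S, T.Nonempty → T.card ≤ d + 1 → ∀ w : κ → ℝ, (∀ i ∈ T, w i ≠ 0) → ∀ u ∈ W,
    ∑ i ∈ T, w i • v i + u ∉ Z

variable {W : Submodule ℝ E} {d : ℕ} {S : Finset κ}

theorem InGeneralPosition.congr {v v' : κ → E} (hv : InGeneralPosition Z W d v S)
    (h : ∀ i ∈ S, v i = v' i) : InGeneralPosition Z W d v' S := by
  intro T hTS hT hcard w hw u hu
  have smul_eq (i : κ) (hi : i ∈ T) : w i • v i = w i • v' i := by rw [h i (hTS hi)]
  rw [← Finset.sum_congr rfl smul_eq]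
  exact hv T hTS hT hcard w hw u hu

theorem InGeneralPosition.insert [DecidableEq κ] {v : κ → E} (hv : InGeneralPosition Z W d v S)
    (hZ : ∀ t : ℝ, t ≠ 0 → ∀ z ∈ Z, t • z ∈ Z) {i₀ : κ}
    (hi₀ : ∀ T ⊆ S, T.card ≤ d →
      v i₀ ∉ Z + ((Submodule.span ℝ (v '' T) ⊔ W : Submodule ℝ E) : Set E)) :
    InGeneralPosition Z W d v (insert i₀ S) := by
  intro T hTS hT hcard w hw u hu
  by_cases hmem : i₀ ∈ T
  · rw [← Finset.add_sum_erase T _ hmem, add_assoc]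
    have card_erase : (T.erase i₀).card ≤ d := by
      rw [Finset.card_erase_of_mem hmem]
      omega
    refine smul_add_notMem hZ (hi₀ _ (Finset.subset_insert_iff.1 hTS) card_erase) (hw i₀ hmem) ?_
    refine Submodule.add_mem_sup (Submodule.sum_mem _ fun i hi => ?_) hu
    exact Submodule.smul_mem _ _ (Submodule.subset_span (Set.mem_image_of_mem v hi))
  · exact hv T ((Finset.subset_insert_iff_of_notMem hmem).1 hTS) hT hcard w hw u hu

theorem finrank_span_image_sup_le [FiniteDimensional ℝ E] (T : Finset κ) (v : κ → E) :
    Module.finrank ℝ ↥(Submodule.span ℝ (v '' T) ⊔ W) ≤ T.card + Module.finrank ℝ W := by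
  classical
  rw [← Finset.coe_image]
  exact (Submodule.finrank_add_le_finrank_add_finrank _ _).trans <|
    Nat.add_le_add_right ((finrank_span_finset_le_card _).trans Finset.card_image_le) _

theorem HasCodimGE.exists_inGeneralPosition [FiniteDimensional ℝ E] (hZ : HasCodimGE Z m)
    (hZ_smul : ∀ t : ℝ, t ≠ 0 → ∀ z ∈ Z, t • z ∈ Z) (hd : d + Module.finrank ℝ W < m)
    (S : Finset κ) (c : κ → E) {ε : ℝ} (hε : 0 < ε) :
    ∃ v : κ → E, (∀ i, dist (c i) (v i) < ε) ∧ InGeneralPosition Z W d v S := by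
  classical
  induction S using Finset.induction_on with
  | empty =>
    refine ⟨c, fun i => by simpa using hε, fun T hTS hT => ?_⟩
    exact absurd (Finset.subset_empty.1 hTS) hT.ne_empty
  | insert i₀ S hi₀ ih =>
    obtain ⟨v, hcv, hv⟩ := ih
    obtain ⟨p, hcp, hp⟩ := hZ.exists_dist_lt_forall_notMem_add
      (W := fun T : {T // T ∈ S.powerset.filter (Finset.card · ≤ d)} =>
        Submodule.span ℝ (v '' T.1) ⊔ W)
      (fun T => (finrank_span_image_sup_le T.1 v).trans_lt <|
        (Nat.add_le_add_right (Finset.mem_filter.1 T.2).2 _).trans_lt hd) (c i₀) hε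
    have update_eq (i : κ) (hi : i ∈ S) : v i = Function.update v i₀ p i :=
      (Function.update_of_ne (ne_of_mem_of_not_mem hi hi₀) p v).symm
    refine ⟨Function.update v i₀ p, fun i => ?_, (hv.congr update_eq).insert hZ_smul ?_⟩
    · by_cases hi : i = i₀
      · rwa [hi, Function.update_self]
      · rw [Function.update_of_ne hi]
        exact hcv i
    · intro T hTS hcard
      rw [← Set.image_congr fun i hi => update_eq i (hTS hi), Function.update_self]
      exact hp ⟨T, Finset.mem_filter.2 ⟨Finset.mem_powerset.2 hTS, hcard⟩⟩

end GeneralPosition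

section Approximation

variable {X : Type*} [TopologicalSpace X] [CompactSpace X] {d : ℕ}

theorem HasCovDimLE.exists_finset_refinement (hX : HasCovDimLE X d) {κ : Type*} {U : κ → Set X}
    (hU : ∀ i, IsOpen (U i)) (hcover : ⋃ i, U i = Set.univ) :
    ∃ t : Finset (Set X), (∀ V ∈ t, IsOpen V ∧ ∃ i, V ⊆ U i) ∧ ⋃ V : t, V.1 = Set.univ ∧
      ∀ x, ∀ s ⊆ t, (∀ V ∈ s, x ∈ V) → s.card ≤ d + 1 := by
  obtain ⟨𝒱, isOpen_𝒱, cover_𝒱, refines_𝒱, mult_𝒱⟩ := hX (Set.range U)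
    (Set.forall_mem_range.2 hU) (by rwa [Set.sUnion_range])
  obtain ⟨t, ht𝒱, ht, cover_t⟩ := isCompact_univ.elim_finite_subcover_image (c := id)
    isOpen_𝒱 (Set.sUnion_eq_biUnion ▸ cover_𝒱.ge)
  lift t to Finset (Set X) using ht
  refine ⟨t, fun V hV => ⟨isOpen_𝒱 V (ht𝒱 hV), Set.exists_range_iff.1 (refines_𝒱 V (ht𝒱 hV))⟩, ?_,
    fun x s hst hs => ?_⟩
  · rw [← Set.univ_subset_iff]
    exact cover_t.trans (Set.biUnion_eq_iUnion _ _).le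
  · have s_subset : (s : Set (Set X)) ⊆ {V ∈ 𝒱 | x ∈ V} := fun V hV => ⟨ht𝒱 (hst hV), hs V hV⟩
    rw [← Set.ncard_coe_finset]
    exact (Set.ncard_le_ncard s_subset (mult_𝒱 x).1).trans (mult_𝒱 x).2

theorem HasCovDimLE.exists_partitionOfUnity [NormalSpace X] (hX : HasCovDimLE X d)
    {κ : Type*} {U : κ → Set X} (hU : ∀ i, IsOpen (U i)) (hcover : ⋃ i, U i = Set.univ) :
    ∃ (t : Finset (Set X)) (f : PartitionOfUnity t X Set.univ),
      (∀ V, ∃ i, tsupport (f V) ⊆ U i) ∧ ∀ x, (f.finsupport x).card ≤ d + 1 := by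
  obtain ⟨t, ht, cover_t, mult_t⟩ := hX.exists_finset_refinement hU hcover
  obtain ⟨f, hf⟩ := PartitionOfUnity.exists_isSubordinate_of_locallyFinite isClosed_univ
    (fun V : t => V.1) (fun V => (ht V V.2).1) (locallyFinite_of_finite _) cover_t.ge
  refine ⟨t, f, fun V => ?_, fun x => ?_⟩
  · obtain ⟨i, hi⟩ := (ht V V.2).2
    exact ⟨i, (hf V).trans hi⟩
  · rw [← Finset.card_map (Function.Embedding.subtype _)]
    refine mult_t x _ (Finset.map_subtype_subset _) ?_
    simp only [Finset.mem_map]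
    rintro _ ⟨V, hV, rfl⟩
    exact hf V (subset_tsupport _ ((f.mem_finsupport x).1 hV))

variable {E : Type*} [NormedAddCommGroup E] [NormedSpace ℝ E] {Z : Set E} {m : ℕ}
  {W : Submodule ℝ E}

theorem HasCovDimLE.exists_dist_lt_forall_add_notMem [NormalSpace X] [FiniteDimensional ℝ E]
    (hX : HasCovDimLE X d) (hZ : HasCodimGE Z m) (hZ_smul : ∀ t : ℝ, t ≠ 0 → ∀ z ∈ Z, t • z ∈ Z)
    (hd : d + Module.finrank ℝ W < m) (M : C(X, E)) {ε : ℝ} (hε : 0 < ε) :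
    ∃ M' : C(X, E), (∀ x, dist (M' x) (M x) < ε) ∧ ∀ x, ∀ u ∈ W, M' x + u ∉ Z := by
  obtain ⟨t, f, hf, mult_f⟩ := hX.exists_partitionOfUnity
    (U := fun x => M ⁻¹' Metric.ball (M x) (ε / 2))
    (fun x => Metric.isOpen_ball.preimage M.continuous)
    (Set.iUnion_eq_univ_iff.2 fun x => ⟨x, Metric.mem_ball_self (half_pos hε)⟩)
  choose c hc using hf
  obtain ⟨v, hcv, hv⟩ := hZ.exists_inGeneralPosition hZ_smul hd Finset.univ (fun V => M (c V))
    (half_pos hε)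
  refine ⟨⟨fun x => ∑ᶠ V, f V x • v V,
    f.continuous_finsum_smul fun _ _ _ => continuousAt_const⟩, fun x => ?_, fun x u hu => ?_⟩
  · rw [ContinuousMap.coe_mk, ← Metric.mem_ball]
    refine f.finsum_smul_mem_convex (g := fun V _ => v V) (Set.mem_univ x)
      (fun V hV => ?_) (convex_ball (M x) ε)
    have dist_center : dist (M x) (M (c V)) < ε / 2 := hc V (subset_tsupport _ hV)
    calc dist (v V) (M x) ≤ dist (v V) (M (c V)) + dist (M x) (M (c V)) :=
          dist_triangle_right _ _ _
      _ < ε / 2 + ε / 2 := add_lt_add (dist_comm (v V) _ ▸ hcv V) dist_center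
      _ = ε := add_halves ε
  · have finsupport_nonempty : (f.finsupport x).Nonempty := Finset.nonempty_of_sum_ne_zero
      ((f.sum_finsupport (Set.mem_univ x)).trans_ne one_ne_zero)
    rw [ContinuousMap.coe_mk, ← f.sum_finsupport_smul_eq_finsum fun V _ => v V]
    exact hv _ (Finset.subset_univ _) finsupport_nonempty (mult_f x) _
      (fun V hV => (f.mem_finsupport x).1 hV) u hu

theorem exists_eqOn_forall_mem_of_approx [NormalSpace X] {Y : Set X} (hY : IsClosed Y) {G : Set E}
    (hG : IsOpen G) (M : C(X, E)) (hYG : Set.MapsTo M Y G)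
    (happrox : ∀ ε > 0, ∃ M' : C(X, E), (∀ x, dist (M' x) (M x) < ε) ∧ ∀ x, M' x ∈ G) :
    ∃ N : C(X, E), Set.EqOn N M Y ∧ ∀ x, N x ∈ G := by
  obtain ⟨V, isOpen_V, hYV, hVG⟩ :=
    normal_exists_closure_subset hY (hG.preimage M.continuous) hYG
  obtain ⟨δ, hδ, thickening_subset⟩ :=
    (isClosed_closure.isCompact.image M.continuous).exists_thickening_subset_open hG
      (Set.image_subset_iff.2 hVG)
  obtain ⟨M', hM', hM'G⟩ := happrox δ hδ
  obtain ⟨ψ, ψ_zero, ψ_one, hψ⟩ := exists_continuous_zero_one_of_isClosed hY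
    isOpen_V.isClosed_compl (Set.disjoint_compl_right_iff_subset.2 hYV)
  refine ⟨⟨fun x => AffineMap.lineMap (M x) (M' x) (ψ x), by fun_prop⟩, fun y hy => ?_,
    fun x => ?_⟩
  · simp only [ContinuousMap.coe_mk, ψ_zero hy, Pi.zero_apply, AffineMap.lineMap_apply_zero]
  · rw [ContinuousMap.coe_mk]
    by_cases hx : x ∈ V
    · refine thickening_subset (Metric.mem_thickening_iff.2 ⟨M x, ⟨x, subset_closure hx, rfl⟩, ?_⟩)
      rw [dist_lineMap_left, Real.norm_of_nonneg (hψ x).1, dist_comm]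
      exact (mul_le_of_le_one_left dist_nonneg (hψ x).2).trans_lt (hM' x)
    · simp only [ψ_one hx, Pi.one_apply, AffineMap.lineMap_apply_one, hM'G x]

end Approximation

section Extension

open scoped Matrix.Norms.L2Operator

namespace HermitianMatrix

variable {ι : Type*} [Fintype ι] [DecidableEq ι] {X : Type*} [TopologicalSpace X]
  {k l p : ℕ}

theorem isOpen_setOf_le_rank_spectralCut (k l : ℕ) :
    IsOpen {A : HermitianMatrix ι | l ≤ (spectralCut k A).1.rank} :=
  (isOpen_setOf_le_matrix_rank l).preimage
    (continuous_subtype_val.comp (continuous_spectralCut k))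

theorem smul_mem_setOf_corank_ge (r : ℕ) (t : ℝ) (A : HermitianMatrix ι)
    (hA : A.1.rank + r ≤ Fintype.card ι) : (t • A).1.rank + r ≤ Fintype.card ι := by
  refine le_trans (Nat.add_le_add_right ?_ r) hA
  have coe_smul : (t • A).1 = A.1 * t • (1 : Matrix ι ι ℂ) := by
    rw [Matrix.mul_smul, Matrix.mul_one, selfAdjoint.val_smul]
  exact coe_smul ▸ Matrix.rank_mul_le_left _ _

theorem le_rank_spectralCut_of_forall_add_notMem (hk : k < Fintype.card ι) (hlk : l + p ≤ k)
    {A : HermitianMatrix ι} (hA : ∀ u ∈ Submodule.span ℝ {(1 : HermitianMatrix ι)},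
      ¬(A + u).1.rank + (p + 2) ≤ Fintype.card ι) : l ≤ (spectralCut k A).1.rank := by
  have rank_sub := hA (-(orderedEigenvalue A k • 1))
    (Submodule.neg_mem _ (Submodule.smul_mem _ _ (Submodule.mem_span_singleton_self _)))
  rw [← sub_eq_add_neg] at rank_sub
  have := add_rank_sub_le_rank_spectralCut_add hk A
  omega

theorem exists_dist_lt_forall_le_rank_spectralCut_of_lt [CompactSpace X] [NormalSpace X] {d : ℕ}
    (hX : HasCovDimLE X d) (hk : k < Fintype.card ι) (hlk : l + p ≤ k) (hd : d + 1 < (p + 2) ^ 2)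
    (M : C(X, HermitianMatrix ι)) {ε : ℝ} (hε : 0 < ε) :
    ∃ M' : C(X, HermitianMatrix ι), (∀ x, dist (M' x) (M x) < ε) ∧
      ∀ x, l ≤ (spectralCut k (M' x)).1.rank := by
  have : Nonempty ι := Fintype.card_pos_iff.1 (Nat.zero_lt_of_lt hk)
  obtain ⟨M', hM', avoids⟩ := hX.exists_dist_lt_forall_add_notMem
    (hasCodimGE_setOf_corank_ge (p + 2)) (fun t _ A hA => smul_mem_setOf_corank_ge _ t A hA)
    (W := Submodule.span ℝ {1})
    ((Nat.add_le_add_left ((finrank_span_le_card _).trans (by simp)) d).trans_lt hd) M hε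
  exact ⟨M', hM', fun x => le_rank_spectralCut_of_forall_add_notMem hk hlk (avoids x)⟩

theorem exists_dist_lt_forall_le_rank_spectralCut_card (hl : l ≤ Fintype.card ι)
    (M : C(X, HermitianMatrix ι)) (hM : ∀ x, (M x).1.PosSemidef) {ε : ℝ} (hε : 0 < ε) :
    ∃ M' : C(X, HermitianMatrix ι), (∀ x, dist (M' x) (M x) < ε) ∧
      ∀ x, l ≤ (spectralCut (Fintype.card ι) (M' x)).1.rank := by
  obtain ⟨δ, hδ, norm_mul_lt⟩ := exists_pos_mul_lt hε ‖(1 : HermitianMatrix ι)‖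
  refine ⟨⟨fun x => M x + δ • 1, by fun_prop⟩, fun x => ?_, fun x => ?_⟩
  · rwa [ContinuousMap.coe_mk, dist_self_add_left, norm_smul, Real.norm_of_nonneg hδ.le, mul_comm]
  · have posDef : (M x + δ • 1).1.PosDef :=
      Matrix.PosDef.posSemidef_add (hM x) (Matrix.PosDef.one.smul hδ)
    rw [ContinuousMap.coe_mk, spectralCut_eq_self posDef.posSemidef (Matrix.rank_le_card_width _),
      Matrix.rank_of_isUnit _ posDef.isUnit]
    exact hl

theorem exists_posSemidef_extension [NormalSpace X] {Y : Set X} (hY : IsClosed Y)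
    (a : C(Y, Matrix ι ι ℂ)) (ha : ∀ y, (a y).PosSemidef) :
    ∃ M : C(X, HermitianMatrix ι), (∀ x, (M x).1.PosSemidef) ∧
      ∀ (y : X) (hy : y ∈ Y), (M y).1 = a ⟨y, hy⟩ := by
  have : TietzeExtension (HermitianMatrix ι) := RCLike.instTietzeExtensionTVS (𝕜 := ℝ)
  let aₕ : C(Y, HermitianMatrix ι) := ⟨fun y => ⟨a y, (ha y).1⟩, by fun_prop⟩
  obtain ⟨g, hg⟩ := ContinuousMap.exists_restrict_eq hY aₕ
  refine ⟨⟨fun x => spectralCut (Fintype.card ι) (g x),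
    (continuous_spectralCut _).comp g.continuous⟩, fun x => posSemidef_spectralCut _ _,
    fun y hy => ?_⟩
  have g_eq : g y = aₕ ⟨y, hy⟩ := DFunLike.congr_fun hg ⟨y, hy⟩
  rw [ContinuousMap.coe_mk, g_eq, spectralCut_eq_self (ha _) (Matrix.rank_le_card_width _)]
  rfl

end HermitianMatrix

open HermitianMatrix in
theorem stmt7_general {ι : Type*} [Fintype ι] {X : Type*} [TopologicalSpace X] [CompactSpace X]
    [NormalSpace X] {d : ℕ} (hX : HasCovDimLE X d) {Y : Set X} (hY : IsClosed Y)
    {k l p : ℕ} (hk : k ≤ Fintype.card ι) (hlk : l + p ≤ k) (hd : d + 1 < (p + 2) ^ 2)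
    (a : C(Y, Matrix ι ι ℂ)) (ha : ∀ y, (a y).PosSemidef)
    (harank : ∀ y, l ≤ (a y).rank ∧ (a y).rank ≤ k) :
    ∃ b : C(X, Matrix ι ι ℂ),
      (∀ x, (b x).PosSemidef) ∧
      (∀ (y : X) (hy : y ∈ Y), b y = a ⟨y, hy⟩) ∧
      ∀ x, l ≤ (b x).rank ∧ (b x).rank ≤ k := by
  classical
  obtain ⟨M, hM, hMa⟩ := exists_posSemidef_extension hY a ha
  have spectralCut_M (y : X) (hy : y ∈ Y) : (spectralCut k (M y)).1 = a ⟨y, hy⟩ := by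
    rw [spectralCut_eq_self (hM y) (hMa y hy ▸ (harank _).2), hMa y hy]
  have approx (ε : ℝ) (hε : ε > 0) : ∃ M' : C(X, HermitianMatrix ι),
      (∀ x, dist (M' x) (M x) < ε) ∧ ∀ x, l ≤ (spectralCut k (M' x)).1.rank := by
    rcases hk.lt_or_eq with hk | rfl
    · exact exists_dist_lt_forall_le_rank_spectralCut_of_lt hX hk hlk hd M hε
    · exact exists_dist_lt_forall_le_rank_spectralCut_card (by omega) M hM hε
  obtain ⟨N, hNM, hN⟩ := exists_eqOn_forall_mem_of_approx hY
    (isOpen_setOf_le_rank_spectralCut k l) M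
    (fun y hy => (harank ⟨y, hy⟩).1.trans_eq (spectralCut_M y hy ▸ rfl)) approx
  refine ⟨⟨fun x => spectralCut k (N x),
    continuous_subtype_val.comp ((continuous_spectralCut k).comp N.continuous)⟩,
    fun x => posSemidef_spectralCut k (N x), fun y hy => ?_,
    fun x => ⟨hN x, rank_spectralCut_le k (N x)⟩⟩
  rw [ContinuousMap.coe_mk, hNM hy, spectralCut_M y hy]

end Extension

/-- If `X` is a compact metric space of finite covering dimension `d`,
`Y ⊆ X` is closed, `k ≤ n`, `k - l ≥ 4d`, and `a ∈ M_n(C(Y))` is positive with pointwise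
rank in `[l, k]`, then `a` extends to a positive `b ∈ M_n(C(X))` with pointwise rank in
`[l, k]`. -/
theorem stmt7 {X : Type*} [MetricSpace X] [CompactSpace X] (d : ℕ) (hdim : IsCovDim X d)
    (Y : Set X) (hY : IsClosed Y)
    (n l k : ℕ) (hn : 0 < n) (hkn : k ≤ n) (hlk : l + 4 * d ≤ k)
    (a : C(Y, Matrix (Fin n) (Fin n) ℂ)) (ha : ∀ y, (a y).PosSemidef)
    (harank : ∀ y : Y, l ≤ (a y).rank ∧ (a y).rank ≤ k) :
    ∃ b : C(X, Matrix (Fin n) (Fin n) ℂ),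
      (∀ x, (b x).PosSemidef) ∧
      (∀ (y : X) (hy : y ∈ Y), b y = a ⟨y, hy⟩) ∧
      (∀ x : X, l ≤ (b x).rank ∧ (b x).rank ≤ k) := by
  exact stmt7_general hdim.1 hY (by simpa using hkn) hlk (by nlinarith) a ha harank
end

section
/- Let X be a compact metric space of finite covering dimension d, let Y ⊆ X be closed, and let n be a positive integer. Let f, g : X → ℤ≥0 be bounded functions with f lower semicontinuous, g upper semicontinuous, f(x) − g(x) ≥ 4d for every x ∈ X, and f(x) ≤ n for every x ∈ X. Suppose a ∈ M_n(C(Y)) is positive and satisfies g(y) ≤ rank(a(y)) ≤ f(y) for all y ∈ Y. Then there is a positive element b ∈ M_n(C(X)) such that b restricted to Y equals a and g(x) ≤ rank(b(x)) ≤ f(x) for all x ∈ X. -/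
/-!
Extend `a` by Tietze to a positive `b`. Cutting it down to `(b - t)₊`, where `t` vanishes on `Y` and
dominates the distance of `b x` to the matrices of rank at most `f x`, enforces the upper bound. The
lower bound is then enforced for `min (g x) j`, one `j` at a time. Near the points where `b x` has
rank `j < g x`, its eigenvalues below a small `ε x` are cut off and `v v*` is added for a vector
`v = v x ≠ 0` orthogonal to the `j` leading eigenvectors. Say that `f - g ≥ e`. If at most `j + e`
eigenvalues survive, then the new rank is at most `j + e + 1 ≤ f x`; otherwise `v` is taken in the
range of `b x`, so that the rank does not increase. The candidates for `v x` form a space of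
dimension at least `e + 1`. If the real dimension of such a space exceeds `d`, then `v` can be
chosen continuously without zeros: over a space of covering dimension `d`, a map whose values on the
nerve of a fine cover are in general position misses `0`, and Baire's theorem turns the local
choices into a global one.
-/

open scoped ComplexOrder

namespace RankExtension

open scoped Matrix

section MatrixRank

variable {K l m n : Type*} [Field K] [Fintype n]

open Matrix

theorem rank_add_le (A B : Matrix m n K) : (A + B).rank ≤ A.rank + B.rank := by
  rw [Matrix.rank, mulVecLin_add]
  exact (Submodule.finrank_mono (LinearMap.range_add_le _ _)).trans
    (Submodule.finrank_add_le_finrank_add_finrank _ _)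

theorem rank_add_finrank_ker (A : Matrix l n K) :
    A.rank + Module.finrank K A.mulVecLin.ker = Fintype.card n := by
  rw [Matrix.rank, LinearMap.finrank_range_add_finrank_ker, Module.finrank_pi]

theorem rank_le_rank_of_forall_mulVec_eq_zero {A : Matrix l n K} {B : Matrix m n K}
    (h : ∀ u, A *ᵥ u = 0 → B *ᵥ u = 0) : B.rank ≤ A.rank := by
  have hker : A.mulVecLin.ker ≤ B.mulVecLin.ker := fun u hu ↦ h u hu
  have := Submodule.finrank_mono hker
  have := rank_add_finrank_ker A
  have := rank_add_finrank_ker B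
  omega

theorem rank_lt_rank_of_forall_mulVec_eq_zero {A : Matrix l n K} {B : Matrix m n K}
    (h : ∀ u, A *ᵥ u = 0 → B *ᵥ u = 0) {v : n → K} (hBv : B *ᵥ v = 0) (hAv : A *ᵥ v ≠ 0) :
    B.rank < A.rank := by
  have hker : A.mulVecLin.ker < B.mulVecLin.ker :=
    SetLike.lt_iff_le_and_exists.2 ⟨fun u hu ↦ h u hu, v, hBv, hAv⟩
  have := Submodule.finrank_lt_finrank_of_lt hker
  have := rank_add_finrank_ker A
  have := rank_add_finrank_ker B
  omega

theorem exists_mulVec_eq_zero_of_rank_lt {A : Matrix l n K} {B : Matrix m n K}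
    (h : B.rank < A.rank) : ∃ u, B *ᵥ u = 0 ∧ A *ᵥ u ≠ 0 := by
  contrapose! h
  exact rank_le_rank_of_forall_mulVec_eq_zero h

theorem exists_mul_mul_eq_one {C : Matrix n n K} {k : ℕ} (hk : k ≤ C.rank) :
    ∃ (P : Matrix (Fin k) n K) (Q : Matrix n (Fin k) K), P * C * Q = 1 := by
  classical
  obtain ⟨V, U, e, -, -, h⟩ := exists_rank_normal_form C
  let σ : Fin k → n := fun i ↦ e.symm (Sum.inl (Fin.castLE hk i))
  refine ⟨V.submatrix σ id, U.submatrix id σ, ?_⟩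
  calc V.submatrix σ id * C * U.submatrix id σ = (V * C * U).submatrix σ σ := by
        ext i j
        simp [mul_apply]
    _ = 1 := by
        ext i j
        simp [h, σ, one_apply]

end MatrixRank

section GeneralPosition

theorem linearIndepOn_update_insert {K V ι : Type*} [DivisionRing K] [AddCommGroup V] [Module K V]
    [DecidableEq ι] {u : ι → V} {a : ι} {z : V} {T : Set ι} (ha : a ∉ T) (hT : LinearIndepOn K u T)
    (hz : z ∉ Submodule.span K (u '' T)) :
    LinearIndepOn K (Function.update u a z) (insert a T) := by
  have hagree : Set.EqOn (Function.update u a z) u T := fun i hi ↦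
    Function.update_of_ne (ne_of_mem_of_not_mem hi ha) _ _
  rw [linearIndepOn_insert ha, linearIndepOn_congr hagree, Set.image_congr hagree,
    Function.update_self]
  exact ⟨hT, hz⟩

theorem exists_partitionOfUnity_card_finsupport_le {X ι : Type*} [TopologicalSpace X]
    [CompactSpace X] [T2Space X] {d : ℕ} (hX : HasCovDimLE X d) {U : ι → Set X}
    (hU : ∀ i, IsOpen (U i)) (hcover : ⋃ i, U i = Set.univ) :
    ∃ (t : Finset (Set X)) (φ : PartitionOfUnity t X) (c : t → ι),
      (∀ V x, φ V x ≠ 0 → x ∈ U (c V)) ∧ ∀ x, (φ.finsupport x).card ≤ d + 1 := by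
  classical
  obtain ⟨𝒱, hopen, hcover𝒱, hrefine, horder⟩ :=
    hX (Set.range U) (Set.forall_mem_range.2 hU) (by rw [Set.sUnion_range, hcover])
  obtain ⟨t, ht𝒱, htfin, hcovert⟩ := isCompact_univ.elim_finite_subcover_image (b := 𝒱) (c := id)
    hopen (by rw [← hcover𝒱, Set.sUnion_eq_biUnion]; rfl)
  lift t to Finset (Set X) using htfin
  obtain ⟨φ, hφ⟩ := PartitionOfUnity.exists_isSubordinate isClosed_univ (fun V : t ↦ (V : Set X))
    (fun V ↦ hopen _ (ht𝒱 V.2)) (by simpa [Set.iUnion_subtype] using hcovert)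
  have hmem : ∀ V x, φ V x ≠ 0 → x ∈ (V : Set X) := fun V x hx ↦ hφ V (subset_tsupport _ hx)
  have hc : ∀ V : t, ∃ i, (V : Set X) ⊆ U i := fun V ↦
    Set.exists_range_iff.1 (hrefine V (ht𝒱 V.2))
  choose c hc using hc
  refine ⟨t, φ, c, fun V x hx ↦ hc V (hmem V x hx), fun x ↦ ?_⟩
  calc (φ.finsupport x).card = ((φ.finsupport x).map (.subtype _)).card := (Finset.card_map _).symm
    _ = ((φ.finsupport x).map (.subtype _) : Set (Set X)).ncard := (Set.ncard_coe_finset _).symm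
    _ ≤ {V ∈ 𝒱 | x ∈ V}.ncard := by
        refine Set.ncard_le_ncard (fun V hV ↦ ?_) (horder x).1
        obtain ⟨W, hW, rfl⟩ := Finset.mem_map.1 hV
        exact ⟨ht𝒱 W.2, hmem W x ((φ.mem_finsupport x).1 hW)⟩
    _ ≤ d + 1 := (horder x).2

variable {E : Type*} [NormedAddCommGroup E] [NormedSpace ℝ E] [FiniteDimensional ℝ E]

theorem exists_dist_lt_forall_notMem {𝒲 : Set (Submodule ℝ E)} (hcount : 𝒲.Countable)
    (hproper : ∀ W ∈ 𝒲, W ≠ ⊤) (y : E) {η : ℝ} (hη : 0 < η) :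
    ∃ z, dist z y < η ∧ ∀ W ∈ 𝒲, z ∉ W := by
  have := FiniteDimensional.complete ℝ E
  have hdense : Dense (⋂ W ∈ 𝒲, (W : Set E)ᶜ) := by
    refine dense_biInter_of_isOpen (fun W _ ↦ W.closed_of_finiteDimensional.isOpen_compl) hcount
      fun W hW ↦ interior_eq_empty_iff_dense_compl.1 ?_
    by_contra! hne
    exact hproper W hW (W.eq_top_of_nonempty_interior' hne)
  obtain ⟨z, hz, hzy⟩ := hdense.exists_dist_lt y hη
  exact ⟨z, by rwa [dist_comm], by simpa using hz⟩

theorem exists_dist_lt_linearIndepOn {ι : Type*} (s : Finset ι) (y : ι → E) {η : ℝ} (hη : 0 < η) :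
    ∃ u : ι → E, (∀ i, dist (u i) (y i) < η) ∧
      ∀ T ⊆ s, T.card ≤ Module.finrank ℝ E → LinearIndepOn ℝ u (T : Set ι) := by
  classical
  induction s using Finset.induction_on with
  | empty => exact ⟨y, fun i ↦ by simpa using hη, fun T hT _ ↦ by simp [Finset.subset_empty.1 hT]⟩
  | insert a s ha ih =>
    obtain ⟨u, hu, hindep⟩ := ih
    let small : Finset (Finset ι) := {T ∈ s.powerset | T.card < Module.finrank ℝ E}
    have hproper : ∀ T ∈ small, Submodule.span ℝ (u '' (T : Set ι)) ≠ ⊤ := fun T hT htop ↦ by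
      have hle := finrank_span_finset_le_card (R := ℝ) (T.image u)
      rw [Finset.coe_image, Set.finrank, htop, finrank_top] at hle
      exact (hle.trans Finset.card_image_le).not_gt (Finset.mem_filter.1 hT).2
    obtain ⟨z, hzy, hz⟩ := exists_dist_lt_forall_notMem
      (𝒲 := (fun T : Finset ι ↦ Submodule.span ℝ (u '' (T : Set ι))) '' (small : Set (Finset ι)))
      (small.countable_toSet.image _) (Set.forall_mem_image.2 hproper) (y a) hη
    refine ⟨Function.update u a z, fun i ↦ ?_, fun T hTs hcard ↦ ?_⟩
    · rcases eq_or_ne i a with rfl | hi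
      · simpa using hzy
      · simpa [hi] using hu i
    have herase : T.erase a ⊆ s := Finset.subset_insert_iff.1 hTs
    by_cases haT : a ∈ T
    · have := Finset.card_erase_lt_of_mem haT
      rw [← Finset.insert_erase haT, Finset.coe_insert]
      refine linearIndepOn_update_insert (by simp) (hindep _ herase (by omega)) ?_
      exact Set.forall_mem_image.1 hz (Finset.mem_coe.2 (by simpa [small, herase] using by omega))
    · rw [Finset.erase_eq_of_notMem haT] at herase
      rw [linearIndepOn_congr (w := u) fun i hi ↦ Function.update_of_ne (by grind) _ _]
      exact hindep T herase hcard

theorem exists_dist_lt_forall_ne_zero {X : Type*} [TopologicalSpace X] [CompactSpace X] [T2Space X]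
    {d : ℕ} (hX : HasCovDimLE X d) (hE : d < Module.finrank ℝ E) (s : C(X, E)) {η : ℝ}
    (hη : 0 < η) : ∃ s' : C(X, E), (∀ x, dist (s' x) (s x) < η) ∧ ∀ x, s' x ≠ 0 := by
  obtain ⟨t, φ, c, hφ, hcard⟩ := exists_partitionOfUnity_card_finsupport_le hX
    (U := fun p ↦ s ⁻¹' Metric.ball (s p) (η / 2))
    (fun p ↦ Metric.isOpen_ball.preimage s.continuous)
    (Set.eq_univ_of_forall fun p ↦ Set.mem_iUnion.2 ⟨p, by simpa using hη⟩)
  obtain ⟨u, hu, hindep⟩ := exists_dist_lt_linearIndepOn Finset.univ (fun V ↦ s (c V)) (half_pos hη)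
  refine ⟨⟨fun x ↦ ∑ᶠ V, φ V x • u V, φ.continuous_finsum_smul (fun V x _ ↦ continuousAt_const)⟩,
    fun x ↦ ?_, fun x hx ↦ ?_⟩
  · refine φ.finsum_smul_mem_convex (s := Set.univ) (g := fun V _ ↦ u V) (Set.mem_univ x)
      (fun V hV ↦ ?_) (convex_ball (s x) η)
    have hsc : dist (s x) (s (c V)) < η / 2 := hφ V x hV
    rw [Metric.mem_ball]
    linarith [dist_triangle_right (u V) (s x) (s (c V)), hu V]
  · have hsum : ∑ V ∈ φ.finsupport x, φ V x • u V = 0 := by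
      rw [φ.sum_finsupport_smul_eq_finsum fun V _ ↦ u V]
      exact hx
    have hzero := linearIndepOn_finset_iff.1
      (hindep _ (Finset.subset_univ _) ((hcard x).trans hE)) (fun V ↦ φ V x) hsum
    have hone : ∑ V ∈ φ.finsupport x, φ V x = 1 := φ.sum_finsupport (Set.mem_univ x)
    rw [Finset.sum_eq_zero hzero] at hone
    exact zero_ne_one hone

end GeneralPosition

section Sections

open Matrix

variable {𝕜 n X : Type*} [RCLike 𝕜] [Fintype n] [TopologicalSpace X]

theorem exists_mulVec_eqOn_of_det_ne_zero [DecidableEq n] [NormalSpace X] {A : X → Matrix n n 𝕜}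
    (hA : Continuous A) (v : C(X, n → 𝕜)) {Z : Set X} (hZ : IsClosed Z)
    (hdet : ∀ x ∈ Z, (A x).det ≠ 0) : ∃ s : C(X, n → 𝕜), ∀ x ∈ Z, A x *ᵥ s x = v x := by
  obtain ⟨c, hc⟩ := ContinuousMap.exists_restrict_eq hZ
    (⟨fun x ↦ (A x).det⁻¹, (hA.matrix_det.comp continuous_subtype_val).inv₀ fun x ↦ hdet x x.2⟩ :
      C(Z, 𝕜))
  refine ⟨⟨fun x ↦ c x • (A x).adjugate *ᵥ v x,
    c.continuous.smul (hA.matrix_adjugate.matrix_mulVec v.continuous)⟩, fun x hx ↦ ?_⟩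
  have hcx : c x = (A x).det⁻¹ := DFunLike.congr_fun hc ⟨x, hx⟩
  rw [ContinuousMap.coe_mk, mulVec_smul, mulVec_mulVec, mul_adjugate, smul_mulVec, one_mulVec, hcx,
    inv_smul_smul₀ (hdet x hx)]

theorem isOpen_setOf_mulVec_ne_zero [CompactSpace X] {C : X → Matrix n n 𝕜} (hC : Continuous C)
    {Z : Set X} (hZ : IsCompact Z) : IsOpen {w : C(X, n → 𝕜) | ∀ x ∈ Z, C x *ᵥ w x ≠ 0} := by
  have hopen : IsOpen {q : X × (n → 𝕜) | C q.1 *ᵥ q.2 ≠ 0} :=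
    isOpen_ne_fun ((hC.comp continuous_fst).matrix_mulVec continuous_snd) continuous_const
  have hgraph : Continuous fun w : C(X, n → 𝕜) ↦ (ContinuousMap.id X).prodMk w :=
    ContinuousMap.continuous_of_continuous_uncurry _ (continuous_snd.prodMk continuous_eval)
  exact (ContinuousMap.isOpen_setOfPred_mapsTo hZ hopen).preimage hgraph

variable [CompactSpace X] [T2Space X] {d r : ℕ}

theorem dense_setOf_mulVec_ne_zero (hX : HasCovDimLE X d) (hr : d < r * Module.finrank ℝ 𝕜)
    {C : X → Matrix n n 𝕜} (hC : Continuous C) {P : Matrix (Fin r) n 𝕜} {Q : Matrix n (Fin r) 𝕜}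
    {Z : Set X} (hZ : IsClosed Z) (hdet : ∀ x ∈ Z, (P * C x * Q).det ≠ 0) :
    Dense {w : C(X, n → 𝕜) | ∀ x ∈ Z, C x *ᵥ w x ≠ 0} := by
  refine Metric.dense_iff.2 fun w η hη ↦ ?_
  obtain ⟨s, hs⟩ := exists_mulVec_eqOn_of_det_ne_zero (A := fun x ↦ P * C x * Q) (by fun_prop)
    ⟨fun x ↦ (P * C x) *ᵥ w x, by fun_prop⟩ hZ hdet
  have hQ : Continuous fun v : Fin r → 𝕜 ↦ Q *ᵥ v := continuous_const.matrix_mulVec continuous_id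
  obtain ⟨η', hη', hQη⟩ := Metric.continuous_iff.1 hQ 0 η hη
  obtain ⟨s', hss', hs'⟩ := exists_dist_lt_forall_ne_zero hX
    (by rwa [Module.finrank_pi_fintype, Finset.sum_const, Finset.card_univ, Fintype.card_fin]) s hη'
  refine ⟨w + ⟨fun x ↦ Q *ᵥ (s' x - s x), hQ.comp (s'.continuous.sub s.continuous)⟩, ?_,
    fun x hx hzero ↦ hs' x ?_⟩
  · rw [Metric.mem_ball, ContinuousMap.dist_lt_iff hη]
    intro x
    simpa [dist_eq_norm] using hQη (s' x - s x) (by simpa [← dist_eq_norm] using hss' x)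
  · refine eq_zero_of_mulVec_eq_zero (hdet x hx) ?_
    calc (P * C x * Q) *ᵥ s' x
        = (P * C x * Q) *ᵥ s x + (P * C x * Q) *ᵥ (s' x - s x) := by rw [← mulVec_add]; simp
      _ = P *ᵥ (C x *ᵥ (w x + Q *ᵥ (s' x - s x))) := by
          rw [hs x hx]
          simp [mulVec_add, mulVec_mulVec, Matrix.mul_assoc]
      _ = 0 := by rw [show C x *ᵥ (w x + Q *ᵥ (s' x - s x)) = 0 from hzero, mulVec_zero]

theorem exists_mem_nhds_dense_setOf_mulVec_ne_zero (hX : HasCovDimLE X d)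
    (hr : d < r * Module.finrank ℝ 𝕜) {C : X → Matrix n n 𝕜} (hC : Continuous C) {x : X}
    (hrank : r ≤ (C x).rank) : ∃ Z ∈ nhds x, IsCompact Z ∧
      Dense {w : C(X, n → 𝕜) | ∀ x ∈ Z, C x *ᵥ w x ≠ 0} := by
  classical
  obtain ⟨P, Q, hPQ⟩ := exists_mul_mul_eq_one hrank
  have hdet : Continuous fun x ↦ (P * C x * Q).det := by fun_prop
  obtain ⟨Z, hZx, hZ, hZdet⟩ := exists_mem_nhds_isClosed_subset
    ((isOpen_ne_fun hdet continuous_const).mem_nhds (by simp [hPQ] : (P * C x * Q).det ≠ 0))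
  exact ⟨Z, hZx, hZ.isCompact, dense_setOf_mulVec_ne_zero hX hr hC hZ hZdet⟩

theorem exists_forall_mulVec_ne_zero (hX : HasCovDimLE X d) (hr : d < r * Module.finrank ℝ 𝕜)
    {C : X → Matrix n n 𝕜} (hC : Continuous C) {O : Set X} (hO : IsLindelof O)
    (hrank : ∀ x ∈ O, r ≤ (C x).rank) : ∃ w : C(X, n → 𝕜), ∀ x ∈ O, C x *ᵥ w x ≠ 0 := by
  choose! Z hZ hZcompact hZdense using fun x hx ↦
    exists_mem_nhds_dense_setOf_mulVec_ne_zero hX hr hC (hrank x hx)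
  obtain ⟨t, htcount, htO, hcover⟩ := hO.elim_nhds_subcover Z hZ
  obtain ⟨w, hw⟩ := (dense_biInter_of_isOpen
    (fun x hx ↦ isOpen_setOf_mulVec_ne_zero hC (hZcompact x (htO x hx))) htcount
    fun x hx ↦ hZdense x (htO x hx)).nonempty
  refine ⟨w, fun x hx ↦ ?_⟩
  obtain ⟨x₀, hx₀, hxZ⟩ := Set.mem_iUnion₂.1 (hcover hx)
  exact Set.mem_iInter₂.1 hw x₀ hx₀ x hxZ

end Sections

theorem posSemidef_add_mulVec_eq_zero {𝕜 n : Type*} [RCLike 𝕜] [Fintype n] {A B : Matrix n n 𝕜}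
    (hA : A.PosSemidef) (hB : B.PosSemidef) {u : n → 𝕜} (hu : (A + B) *ᵥ u = 0) :
    A *ᵥ u = 0 ∧ B *ᵥ u = 0 := by
  rw [← hA.dotProduct_mulVec_zero_iff, ← hB.dotProduct_mulVec_zero_iff,
    ← add_eq_zero_iff_of_nonneg (hA.dotProduct_mulVec_nonneg u) (hB.dotProduct_mulVec_nonneg u),
    ← dotProduct_add, ← Matrix.add_mulVec, hu, dotProduct_zero]

section HermitianMatrices

theorem continuous_cfc_uncurry {𝕜 A X : Type*} {p : A → Prop} [RCLike 𝕜] [NormedRing A] [StarRing A]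
    [NormedAlgebra 𝕜 A] [IsometricContinuousFunctionalCalculus 𝕜 A p] [ContinuousStar A]
    [CompleteSpace A] [TopologicalSpace X] {F : X → 𝕜 → 𝕜} (hF : Continuous F.uncurry) {b : X → A}
    (hb : Continuous b) (hp : ∀ x, p (b x)) : Continuous fun x ↦ cfc (F x) (b x) := by
  have hF' : Continuous fun x ↦ UniformOnFun.ofFun {t : Set 𝕜 | IsCompact t ∧ t ⊆ .univ} (F x) := by
    rw [show {t : Set 𝕜 | IsCompact t ∧ t ⊆ .univ} = {t | IsCompact t} by simp]
    exact ContinuousMap.isUniformEmbedding_toUniformOnFunIsCompact.uniformContinuous.continuous.comp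
      (ContinuousMap.curry ⟨_, hF⟩).continuous
  exact continuousOn_cfc_setProd_nhdsSet.comp_continuous (hF'.prodMk hb) fun x ↦
    ⟨(hF.comp (.prodMk_right x)).continuousOn, hp x, Filter.univ_mem⟩

variable {𝕜 n : Type*} [RCLike 𝕜] [Fintype n] [DecidableEq n] {M : Matrix n n 𝕜}

theorem cfc_mul_cfc (M : Matrix n n 𝕜) (p q : ℝ → ℝ) :
    cfc p M * cfc q M = cfc (fun s ↦ p s * q s) M :=
  (cfc_mul p q M (M.finite_real_spectrum.continuousOn p)
    (M.finite_real_spectrum.continuousOn q)).symm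

theorem mulVec_cfc_eq_zero {p q : ℝ → ℝ} (h : ∀ s ∈ spectrum ℝ M, p s = 0 → q s = 0) {u : n → 𝕜}
    (hu : cfc p M *ᵥ u = 0) : cfc q M *ᵥ u = 0 := by
  have hfactor : cfc q M = cfc (fun s ↦ q s / p s) M * cfc p M := by
    rw [cfc_mul_cfc]
    exact cfc_congr fun s hs ↦ (div_mul_cancel_of_imp (h s hs)).symm
  rw [hfactor, ← Matrix.mulVec_mulVec, hu, Matrix.mulVec_zero]

theorem rank_cfc (hM : M.IsHermitian) (q : ℝ → ℝ) :
    (cfc q M).rank = Fintype.card {i // q (hM.eigenvalues i) ≠ 0} := by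
  rw [hM.cfc_eq, Matrix.IsHermitian.cfc, Unitary.conjStarAlgAut_apply,
    Matrix.rank_mul_eq_left_of_isUnit_det, Matrix.rank_mul_eq_right_of_isUnit_det,
    Matrix.rank_diagonal]
  · simp
  · exact (Matrix.isUnit_iff_isUnit_det _).1 ⟨Unitary.toUnits hM.eigenvectorUnitary, rfl⟩
  · exact (Matrix.isUnit_iff_isUnit_det _).1 ⟨Unitary.toUnits (star hM.eigenvectorUnitary), rfl⟩

theorem rank_cfc_le_add (hM : M.IsHermitian) {p q r : ℝ → ℝ}
    (h : ∀ s, p s ≠ 0 → q s ≠ 0 ∨ r s ≠ 0) : (cfc p M).rank ≤ (cfc q M).rank + (cfc r M).rank := by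
  simp only [rank_cfc hM]
  exact (Fintype.card_subtype_mono _ _ fun i ↦ h (hM.eigenvalues i)).trans
    (Fintype.card_subtype_or _ _)

/-- The cut-down `(M - t)₊` of a Hermitian matrix `M`: its eigenvalues are lowered by `t` and those
that become negative are replaced by `0`. -/
noncomputable def cutDown (M : Matrix n n 𝕜) (t : ℝ) : Matrix n n 𝕜 :=
  cfc (fun s : ℝ ↦ max (s - t) 0) M

open scoped MatrixOrder in
theorem posSemidef_cfc {q : ℝ → ℝ} (hq : ∀ s ∈ spectrum ℝ M, 0 ≤ q s) : (cfc q M).PosSemidef :=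
  Matrix.nonneg_iff_posSemidef.1 (cfc_nonneg hq)

theorem posSemidef_cutDown (M : Matrix n n 𝕜) (t : ℝ) : (cutDown M t).PosSemidef :=
  posSemidef_cfc fun _ _ ↦ le_max_right _ _

open scoped MatrixOrder in
theorem spectrum_nonneg_of_posSemidef (hM : M.PosSemidef) {s : ℝ} (hs : s ∈ spectrum ℝ M) : 0 ≤ s :=
  spectrum_nonneg_of_nonneg hM.nonneg hs

theorem cutDown_zero (hM : M.PosSemidef) : cutDown M 0 = M := by
  refine (cfc_congr fun s hs ↦ ?_).trans (cfc_id' ℝ M hM.1)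
  rw [sub_zero, max_eq_left (spectrum_nonneg_of_posSemidef hM hs)]

theorem rank_cutDown (hM : M.IsHermitian) (t : ℝ) :
    (cutDown M t).rank = Fintype.card {i // t < hM.eigenvalues i} := by
  rw [cutDown, rank_cfc hM]
  exact Fintype.card_congr (.subtypeEquivRight fun i ↦ by simp)

theorem exists_gt_rank_cutDown_le (hM : M.IsHermitian) (t : ℝ) :
    ∃ t' > t, (cutDown M t).rank ≤ (cutDown M t').rank := by
  have hev : ∀ᶠ t' in nhdsWithin t (Set.Ioi t), ∀ i, t < hM.eigenvalues i → t' < hM.eigenvalues i :=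
    Filter.eventually_all.2 fun i ↦ Filter.eventually_imp_distrib_left.2 fun hi ↦
      nhdsWithin_le_nhds (eventually_lt_nhds hi)
  obtain ⟨t', ht', hlt⟩ := (hev.and self_mem_nhdsWithin).exists
  refine ⟨t', hlt, ?_⟩
  rw [rank_cutDown hM, rank_cutDown hM]
  exact Fintype.card_subtype_mono _ _ ht'

open scoped Matrix.Norms.L2Operator

/-- The operator norm makes the matrices over `𝕜` a real normed algebra. The library has only the
`𝕜`-algebra structure, while the functional calculus of Hermitian matrices has real scalars. -/
noncomputable local instance instNormedAlgebraRealMatrix : NormedAlgebra ℝ (Matrix n n 𝕜) where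
  norm_smul_le r A := by
    rw [RCLike.real_smul_eq_coe_smul (K := 𝕜) r A, norm_smul, RCLike.norm_ofReal, Real.norm_eq_abs]

theorem continuous_cutDown {X : Type*} [TopologicalSpace X] {b : X → Matrix n n 𝕜}
    (hb : Continuous b) (hherm : ∀ x, (b x).IsHermitian) {t : X → ℝ} (ht : Continuous t) :
    Continuous fun x ↦ cutDown (b x) (t x) :=
  continuous_cfc_uncurry (F := fun x s ↦ max (s - t x) 0)
    (by simp only [Function.uncurry_def]; fun_prop) hb hherm

theorem norm_sub_cutDown_le (hM : M.PosSemidef) {t : ℝ} (ht : 0 ≤ t) : ‖M - cutDown M t‖ ≤ t := by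
  have hsub : M - cutDown M t = cfc (fun s : ℝ ↦ s - max (s - t) 0) M := by
    rw [cutDown, cfc_sub (fun s : ℝ ↦ s) _ M, cfc_id' ℝ M hM.1.isSelfAdjoint]
  rw [hsub]
  refine norm_cfc_le ht fun s hs ↦ ?_
  have := spectrum_nonneg_of_posSemidef hM hs
  rw [Real.norm_eq_abs, abs_le]
  constructor <;> cases max_cases (s - t) 0 <;> linarith

/-- The operator-norm distance from `M` to the matrices of rank at most `k`. For positive
semidefinite `M` it is the `(k + 1)`-st largest eigenvalue, but continuity in `M` is immediate. -/
noncomputable def rankDist (k : ℕ) (M : Matrix n n 𝕜) : ℝ :=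
  Metric.infDist M {R | R.rank ≤ k}

theorem continuous_rankDist (k : ℕ) : Continuous (rankDist k : Matrix n n 𝕜 → ℝ) :=
  Metric.continuous_infDist_pt _

theorem rankDist_nonneg (k : ℕ) (M : Matrix n n 𝕜) : 0 ≤ rankDist k M :=
  Metric.infDist_nonneg

theorem one_le_norm_of_mulVec_eq_self {A : Matrix n n 𝕜} {v : n → 𝕜} (hA : A *ᵥ v = v)
    (hv : v ≠ 0) : 1 ≤ ‖A‖ := by
  have hpos : 0 < ‖WithLp.toLp 2 v‖ := by simpa using hv
  have hle := A.l2_opNorm_mulVec (WithLp.toLp 2 v)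
  rw [hA] at hle
  exact (le_mul_iff_one_le_left hpos).1 hle

theorem norm_cfc_inv_le {t : ℝ} (ht : 0 < t) :
    ‖cfc (fun s ↦ if t < s then s⁻¹ else 0) M‖ ≤ t⁻¹ := by
  refine norm_cfc_le (by positivity) fun s _ ↦ ?_
  split_ifs with hs
  · rw [norm_inv, Real.norm_of_nonneg (ht.trans hs).le]
    exact inv_anti₀ ht hs.le
  · simpa using ht.le

theorem cfc_inv_mul_mul_cutDown (hM : M.IsHermitian) {t : ℝ} (ht : 0 ≤ t) :
    cfc (fun s ↦ if t < s then s⁻¹ else 0) M * M * cutDown M t = cutDown M t := by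
  nth_rw 2 [← cfc_id' ℝ M hM.isSelfAdjoint]
  rw [cutDown, cfc_mul_cfc, cfc_mul_cfc]
  refine cfc_congr fun s _ ↦ ?_
  rcases lt_or_ge t s with hs | hs
  · simp [hs, (ht.trans_lt hs).ne']
  · simp [hs]

/- A vector in the kernel of `R` but in the range of `(M - t)₊` witnesses that `M - R` is large:
there `M - R` acts as `M`, which is bounded below by `t`. -/
theorem le_norm_sub_of_rank_lt (hM : M.IsHermitian) {t : ℝ} (ht : 0 < t) {R : Matrix n n 𝕜}
    (hR : R.rank < (cutDown M t).rank) : t ≤ ‖M - R‖ := by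
  obtain ⟨u, hRu, hu⟩ := exists_mulVec_eq_zero_of_rank_lt
    ((R.rank_mul_le_left (cutDown M t)).trans_lt hR)
  set Q : Matrix n n 𝕜 := cfc (fun s ↦ if t < s then s⁻¹ else 0) M
  have hfix : (Q * (M - R)) *ᵥ (cutDown M t *ᵥ u) = cutDown M t *ᵥ u := by
    rw [Matrix.mulVec_mulVec, mul_sub, sub_mul, cfc_inv_mul_mul_cutDown hM ht.le, Matrix.sub_mulVec,
      Matrix.mul_assoc, ← Matrix.mulVec_mulVec _ Q, hRu, Matrix.mulVec_zero, sub_zero]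
  have hone : 1 ≤ t⁻¹ * ‖M - R‖ := calc
    1 ≤ ‖Q * (M - R)‖ := one_le_norm_of_mulVec_eq_self hfix hu
    _ ≤ ‖Q‖ * ‖M - R‖ := norm_mul_le _ _
    _ ≤ t⁻¹ * ‖M - R‖ := by gcongr; exact norm_cfc_inv_le ht
  rwa [← div_eq_inv_mul, one_le_div ht] at hone

theorem rank_cutDown_le_iff (hM : M.PosSemidef) {t : ℝ} (ht : 0 ≤ t) {k : ℕ} :
    (cutDown M t).rank ≤ k ↔ rankDist k M ≤ t := by
  refine ⟨fun h ↦ ?_, fun h ↦ ?_⟩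
  · calc rankDist k M ≤ dist M (cutDown M t) := Metric.infDist_le_dist_of_mem h
      _ ≤ t := by rw [dist_eq_norm]; exact norm_sub_cutDown_le hM ht
  · obtain ⟨t', htt', hrank⟩ := exists_gt_rank_cutDown_le hM.1 t
    by_contra! hk
    have : t' ≤ rankDist k M := (Metric.le_infDist ⟨0, by simp⟩).2 fun R hR ↦ by
      rw [dist_eq_norm]
      exact le_norm_sub_of_rank_lt hM.1 (ht.trans_lt htt') (hR.trans_lt (hk.trans_le hrank))
    linarith

theorem rank_le_iff (hM : M.PosSemidef) {k : ℕ} : M.rank ≤ k ↔ rankDist k M ≤ 0 := by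
  rw [← rank_cutDown_le_iff hM le_rfl, cutDown_zero hM]

/-- A positive number below the `j`-th largest eigenvalue of `M`, depending continuously on `M`, if
`j ≤ M.rank`, and `0` otherwise. -/
noncomputable def threshold : ℕ → Matrix n n 𝕜 → ℝ
  | 0, _ => 1
  | j + 1, M => rankDist j M / 2

theorem continuous_threshold : ∀ j, Continuous (threshold j : Matrix n n 𝕜 → ℝ)
  | 0 => continuous_const
  | j + 1 => (continuous_rankDist j).div_const 2

theorem threshold_nonneg : ∀ (j : ℕ) (M : Matrix n n 𝕜), 0 ≤ threshold j M
  | 0, _ => zero_le_one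
  | j + 1, M => div_nonneg (rankDist_nonneg j M) zero_le_two

theorem threshold_pos_iff (hM : M.PosSemidef) : ∀ {j : ℕ}, 0 < threshold j M ↔ j ≤ M.rank
  | 0 => by simp [threshold]
  | j + 1 => by
    rw [threshold, div_pos_iff_of_pos_right two_pos, ← not_le, ← rank_le_iff hM, not_le,
      Nat.succ_le_iff]

theorem le_rank_cutDown_threshold (hM : M.PosSemidef) :
    ∀ {j : ℕ}, 0 < threshold j M → j ≤ (cutDown M (threshold j M)).rank
  | 0, _ => Nat.zero_le _
  | j + 1, h => by
    rw [Nat.succ_le_iff, ← not_le, rank_cutDown_le_iff hM h.le, not_le]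
    exact half_lt_self ((div_pos_iff_of_pos_right two_pos).1 h)

/-- A function of `M` whose columns supply the vectors that raise the rank of `M`. It vanishes on
the eigenvalues above `τ`, so these vectors are new directions; the term `max (ε - rankDist k M) 0`
makes it nonzero on the kernel of `M` when `M` has at most `k` eigenvalues that are at least `ε`. -/
noncomputable def correction (k : ℕ) (τ ε : ℝ) (M : Matrix n n 𝕜) : Matrix n n 𝕜 :=
  cfc (fun s : ℝ ↦ ε * (max (τ - s) 0 * (s + max (ε - rankDist k M) 0))) M

/-- The cut-down `(M - ε)₊` plus the rank-one matrix `v v*`, where `v = correction k τ ε M w`. -/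
noncomputable def raise (k : ℕ) (τ ε : ℝ) (M : Matrix n n 𝕜) (w : n → 𝕜) : Matrix n n 𝕜 :=
  cutDown M ε + Matrix.vecMulVec (correction k τ ε M *ᵥ w) (star (correction k τ ε M *ᵥ w))

variable {k j : ℕ} {τ ε : ℝ} {w : n → 𝕜}

theorem isHermitian_correction (k : ℕ) (τ ε : ℝ) (M : Matrix n n 𝕜) :
    (correction k τ ε M).IsHermitian :=
  cfc_predicate _ M

theorem posSemidef_raise (k : ℕ) (τ ε : ℝ) (M : Matrix n n 𝕜) (w : n → 𝕜) :
    (raise k τ ε M w).PosSemidef :=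
  (posSemidef_cutDown M ε).add (Matrix.posSemidef_vecMulVec_self_star _)

theorem raise_zero (hM : M.PosSemidef) : raise k τ 0 M w = M := by
  simp [raise, correction, cutDown_zero hM]

theorem lt_rank_correction_add (hM : M.PosSemidef) (hε : 0 < ε) (hτ : rankDist j M < τ)
    (hk : k < Fintype.card n) : k < (correction k τ ε M).rank + j := by
  set h : ℝ := max (ε - rankDist k M) 0
  have hshift : k < (cfc (fun s : ℝ ↦ s + h) M).rank := by
    rcases lt_or_ge (rankDist k M) ε with hlt | hge
    · have hpos : 0 < h := lt_max_of_lt_left (sub_pos.2 hlt)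
      rw [rank_cfc hM.1, Fintype.card_congr (Equiv.subtypeUnivEquiv fun i ↦ ?_)]
      · exact hk
      · exact (add_pos_of_nonneg_of_pos (hM.eigenvalues_nonneg i) hpos).ne'
    · have hzero : h = 0 := max_eq_right (sub_nonpos.2 hge)
      simp only [hzero, add_zero]
      rw [cfc_id' ℝ M hM.1.isSelfAdjoint, ← not_le, rank_le_iff hM, not_le]
      exact hε.trans_le hge
  calc k < (cfc (fun s : ℝ ↦ s + h) M).rank := hshift
    _ ≤ (correction k τ ε M).rank + (cutDown M (rankDist j M)).rank := by
        refine rank_cfc_le_add hM.1 fun s hs ↦ ?_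
        rcases le_or_gt s (rankDist j M) with hle | hlt
        · have hτs : max (τ - s) 0 ≠ 0 := (lt_max_of_lt_left (by linarith)).ne'
          exact .inl (mul_ne_zero hε.ne' (mul_ne_zero hτs hs))
        · exact .inr (lt_max_of_lt_left (by linarith)).ne'
    _ ≤ (correction k τ ε M).rank + j := by
        gcongr
        exact (rank_cutDown_le_iff hM (rankDist_nonneg j M)).2 le_rfl

theorem cutDown_mul_correction (k : ℕ) (τ ε : ℝ) (M : Matrix n n 𝕜) :
    cutDown M τ * correction k τ ε M = 0 := by
  rw [cutDown, correction, cfc_mul_cfc, ← cfc_const_zero ℝ M]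
  refine cfc_congr fun s _ ↦ ?_
  rcases le_total s τ with hs | hs <;> simp [hs]

theorem rank_cutDown_lt_rank_raise (hετ : ε ≤ τ) (hv : correction k τ ε M *ᵥ w ≠ 0) :
    (cutDown M τ).rank < (raise k τ ε M w).rank := by
  set v := correction k τ ε M *ᵥ w with hvdef
  refine rank_lt_rank_of_forall_mulVec_eq_zero (v := v) (fun u hu ↦ ?_) ?_ fun hzero ↦ hv ?_
  · refine mulVec_cfc_eq_zero (fun s _ hs ↦ ?_) (posSemidef_add_mulVec_eq_zero
      (posSemidef_cutDown M ε) (Matrix.posSemidef_vecMulVec_self_star v) hu).1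
    exact max_eq_right (by linarith [max_eq_right_iff.1 hs])
  · rw [hvdef, Matrix.mulVec_mulVec, cutDown_mul_correction, Matrix.zero_mulVec]
  · have hvv := (posSemidef_add_mulVec_eq_zero (posSemidef_cutDown M ε)
      (Matrix.posSemidef_vecMulVec_self_star v) hzero).2
    simpa [Matrix.vecMulVec_mulVec] using hvv

theorem mulVec_raise_eq_zero (hε : 0 < ε) (hk : ε ≤ rankDist k M) (hM : M.IsHermitian) {u : n → 𝕜}
    (hu : M *ᵥ u = 0) : raise k τ ε M w *ᵥ u = 0 := by
  rw [← cfc_id' ℝ M hM.isSelfAdjoint] at hu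
  have hcut : cutDown M ε *ᵥ u = 0 :=
    mulVec_cfc_eq_zero (fun s _ hs ↦ by simp [hs, hε.le]) hu
  have hcorr : correction k τ ε M *ᵥ u = 0 :=
    mulVec_cfc_eq_zero (fun s _ hs ↦ by simp [hs, hk]) hu
  have horth : star (correction k τ ε M *ᵥ w) ⬝ᵥ u = 0 := by
    rw [Matrix.star_mulVec, ← Matrix.dotProduct_mulVec, isHermitian_correction, hcorr,
      dotProduct_zero]
  rw [raise, Matrix.add_mulVec, hcut, Matrix.vecMulVec_mulVec, horth]
  simp

theorem rank_raise_le (hM : M.PosSemidef) (hε : 0 < ε) :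
    (raise k τ ε M w).rank ≤ max M.rank (k + 1) := by
  rcases le_total ε (rankDist k M) with hk | hk
  · exact le_max_of_le_left
      (rank_le_rank_of_forall_mulVec_eq_zero fun u hu ↦ mulVec_raise_eq_zero hε hk hM.1 hu)
  · refine le_max_of_le_right ((rank_add_le _ _).trans (add_le_add ?_ ?_))
    · exact (rank_cutDown_le_iff hM hε.le).2 hk
    · exact Matrix.rank_vecMulVec_le _ _

section Continuity

variable {X : Type*} [TopologicalSpace X] {b : X → Matrix n n 𝕜} {τ ε : X → ℝ}

theorem continuous_correction (k : ℕ) (hb : Continuous b) (hherm : ∀ x, (b x).IsHermitian)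
    (hτ : Continuous τ) (hε : Continuous ε) :
    Continuous fun x ↦ correction k (τ x) (ε x) (b x) := by
  have hdist : Continuous fun p : X × ℝ ↦ rankDist k (b p.1) :=
    (continuous_rankDist k).comp (hb.comp continuous_fst)
  exact continuous_cfc_uncurry
    (F := fun x s ↦ ε x * (max (τ x - s) 0 * (s + max (ε x - rankDist k (b x)) 0)))
    (by simp only [Function.uncurry_def]; fun_prop) hb hherm

theorem continuous_raise (k : ℕ) (hb : Continuous b) (hherm : ∀ x, (b x).IsHermitian)
    (hτ : Continuous τ) (hε : Continuous ε) {w : X → n → 𝕜} (hw : Continuous w) :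
    Continuous fun x ↦ raise k (τ x) (ε x) (b x) (w x) := by
  have hv := (continuous_correction k hb hherm hτ hε).matrix_mulVec hw
  exact (continuous_cutDown hb hherm hε).add (hv.matrix_vecMulVec hv.star)

end Continuity

end HermitianMatrices

section Extension

theorem exists_eqOn_eqOn {X : Type*} [TopologicalSpace X] [NormalSpace X] {A B : Set X}
    (hA : IsClosed A) (hB : IsClosed B) {u v : X → ℝ} (hu : Continuous u) (hv : Continuous v)
    (huv : Set.EqOn u v (A ∩ B)) : ∃ h : C(X, ℝ), Set.EqOn h u A ∧ Set.EqOn h v B := by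
  classical
  have hpu : Set.EqOn (A.piecewise u v) u A := Set.piecewise_eqOn _ _ _
  have hpv : Set.EqOn (A.piecewise u v) v B := fun x hx ↦ by
    by_cases hxA : x ∈ A
    · rw [hpu hxA, huv ⟨hxA, hx⟩]
    · exact Set.piecewise_eq_of_notMem _ _ _ hxA
  have hp : ContinuousOn (A.piecewise u v) (A ∪ B) :=
    (hu.continuousOn.congr hpu).union_of_isClosed (hv.continuousOn.congr hpv) hA hB
  obtain ⟨h, hh⟩ := ContinuousMap.exists_restrict_eq (hA.union hB) ⟨_, hp.domRestrict⟩
  have heq : Set.EqOn h (A.piecewise u v) (A ∪ B) := fun x hx ↦ DFunLike.congr_fun hh ⟨x, hx⟩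
  exact ⟨h, fun x hx ↦ (heq (.inl hx)).trans (hpu hx), fun x hx ↦ (heq (.inr hx)).trans (hpv hx)⟩

theorem exists_continuousMap_pos_on {X : Type*} [TopologicalSpace X] [NormalSpace X] {K W : Set X}
    (hK : IsClosed K) (hW : IsOpen W) (hKW : K ⊆ W) {τ : X → ℝ} (hτ : Continuous τ)
    (hτ0 : ∀ x, 0 ≤ τ x) (hτK : ∀ x ∈ K, 0 < τ x) :
    ∃ ε : C(X, ℝ), (∀ x, 0 ≤ ε x ∧ ε x ≤ τ x) ∧ (∀ x ∈ K, 0 < ε x) ∧ ∀ x, 0 < ε x → x ∈ W := by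
  obtain ⟨χ, hχW, hχK, hχ⟩ := exists_continuous_zero_one_of_isClosed hW.isClosed_compl hK
    (Set.disjoint_compl_left_iff_subset.2 hKW)
  refine ⟨⟨fun x ↦ χ x * τ x, χ.continuous.mul hτ⟩,
    fun x ↦ ⟨mul_nonneg (hχ x).1 (hτ0 x), mul_le_of_le_one_left (hτ0 x) (hχ x).2⟩,
    fun x hx ↦ by simpa [hχK hx] using hτK x hx, fun x hx ↦ by_contra fun hxW ↦ hx.ne' ?_⟩
  simp [hχW hxW]

theorem isLindelof_setOf_pos {X : Type*} [TopologicalSpace X] [CompactSpace X] {ε : X → ℝ}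
    (hε : Continuous ε) : IsLindelof {x | 0 < ε x} := by
  have hunion : {x | 0 < ε x} = ⋃ m : ℕ, {x | 1 / ((m : ℝ) + 1) ≤ ε x} := by
    ext x
    simp only [Set.mem_ofPred_eq, Set.mem_iUnion]
    refine ⟨fun hx ↦ ?_, fun ⟨m, hm⟩ ↦ Nat.one_div_pos_of_nat.trans_le hm⟩
    obtain ⟨m, hm⟩ := exists_nat_one_div_lt hx
    exact ⟨m, hm.le⟩
  rw [hunion]
  exact (isSigmaCompact_iUnion_of_isCompact _ fun m ↦
    (isClosed_le continuous_const hε).isCompact).isLindelof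

theorem exists_posSemidef_extension {𝕜 n X : Type*} [RCLike 𝕜] [Finite n] [TopologicalSpace X]
    [NormalSpace X] {Y : Set X} (hY : IsClosed Y) (a : C(Y, Matrix n n 𝕜))
    (ha : ∀ y, (a y).PosSemidef) :
    ∃ b : C(X, Matrix n n 𝕜), (∀ x, (b x).PosSemidef) ∧ ∀ y : Y, b y = a y := by
  classical
  cases nonempty_fintype n
  obtain ⟨c, hc⟩ := ContinuousMap.exists_restrict_eq hY a
  have hcont : Continuous fun x ↦ (2⁻¹ : ℝ) • (c x + (c x).conjTranspose) := by fun_prop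
  have hherm : ∀ x, ((2⁻¹ : ℝ) • (c x + (c x).conjTranspose)).IsHermitian := fun x ↦ by
    simp [Matrix.IsHermitian, add_comm]
  refine ⟨⟨_, continuous_cutDown hcont hherm (continuous_const (y := 0))⟩,
    fun x ↦ posSemidef_cutDown _ _, fun y ↦ ?_⟩
  have hcy : c y = a y := DFunLike.congr_fun hc y
  have hpart : (2⁻¹ : ℝ) • (a y + (a y).conjTranspose) = a y := by
    rw [(ha y).1, ← two_smul ℝ, inv_smul_smul₀ two_ne_zero]
  rw [ContinuousMap.coe_mk, hcy, hpart, cutDown_zero (ha y)]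

variable {𝕜 n X : Type*} [RCLike 𝕜] [Fintype n] [TopologicalSpace X]

theorem exists_posSemidef_extension_rank_le [NormalSpace X] {Y : Set X} (hY : IsClosed Y)
    {f : X → ℕ} (hf : LowerSemicontinuous f) (a : C(Y, Matrix n n 𝕜))
    (ha : ∀ y, (a y).PosSemidef) (haf : ∀ y, (a y).rank ≤ f y) :
    ∃ b : C(X, Matrix n n 𝕜), (∀ x, (b x).PosSemidef) ∧ (∀ y : Y, b y = a y) ∧
      ∀ x, (b x).rank ≤ f x := by
  classical
  obtain ⟨b, hb, hba⟩ := exists_posSemidef_extension hY a ha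
  have hdist : ∀ j, ∃ h : C(X, ℝ), Set.EqOn h 0 Y ∧
      Set.EqOn h (fun x ↦ rankDist j (b x)) (f ⁻¹' Set.Iic j) := fun j ↦ by
    refine exists_eqOn_eqOn hY (hf.isClosed_preimage j) continuous_const
      ((continuous_rankDist j).comp b.continuous) fun x ⟨hxY, hxj⟩ ↦ ?_
    refine (rankDist_nonneg j _).antisymm ((rank_le_iff (hb x)).1 ?_)
    rw [hba ⟨x, hxY⟩]
    exact (haf ⟨x, hxY⟩).trans hxj
  choose h hhY hhf using hdist
  let t : X → ℝ := fun x ↦ ∑ j ∈ Finset.range (Fintype.card n), |h j x|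
  have ht0 : ∀ x, 0 ≤ t x := fun x ↦ Finset.sum_nonneg fun j _ ↦ abs_nonneg _
  refine ⟨⟨_, continuous_cutDown b.continuous (fun x ↦ (hb x).1) (t := t) (by fun_prop)⟩,
    fun x ↦ posSemidef_cutDown _ _, fun y ↦ ?_, fun x ↦ ?_⟩
  · have hty : t y = 0 := Finset.sum_eq_zero fun j _ ↦ by simp [hhY j y.2]
    rw [ContinuousMap.coe_mk, hty, cutDown_zero (hb y), hba]
  · rcases lt_or_ge (f x) (Fintype.card n) with hfx | hfx
    · refine (rank_cutDown_le_iff (hb x) (ht0 x)).2 ?_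
      calc rankDist (f x) (b x) = h (f x) x := (hhf (f x) (le_refl (f x))).symm
        _ ≤ |h (f x) x| := le_abs_self _
        _ ≤ t x := Finset.single_le_sum (f := fun j ↦ |h j x|) (fun j _ ↦ abs_nonneg _)
            (Finset.mem_range.2 hfx)
    · exact (Matrix.rank_le_card_width _).trans hfx

variable [CompactSpace X] [T2Space X] {d e j : ℕ}

theorem exists_lt_rank_and_rank_le_max (hX : HasCovDimLE X d)
    (he : d < (e + 1) * Module.finrank ℝ 𝕜) (b : C(X, Matrix n n 𝕜))
    (hb : ∀ x, (b x).PosSemidef) {K U : Set X} (hK : IsClosed K) (hU : IsOpen U) (hKU : K ⊆ U)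
    (hrank : ∀ x ∈ K, (b x).rank = j) (hUn : ∀ x ∈ U, j + e < Fintype.card n) :
    ∃ b' : C(X, Matrix n n 𝕜), (∀ x, (b' x).PosSemidef) ∧ ∀ x, x ∉ K ∧ b' x = b x ∨
      x ∈ U ∧ j < (b' x).rank ∧ (b' x).rank ≤ max (b x).rank (j + e + 1) := by
  classical
  let τ : X → ℝ := fun x ↦ threshold j (b x)
  have hτ : Continuous τ := (continuous_threshold j).comp b.continuous
  have hdist : Continuous fun x ↦ rankDist j (b x) := (continuous_rankDist j).comp b.continuous
  have hτK : ∀ x ∈ K, 0 < τ x := fun x hx ↦ (threshold_pos_iff (hb x)).2 (hrank x hx).ge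
  obtain ⟨ε, hετ, hεK, hεW⟩ := exists_continuousMap_pos_on hK (hU.inter (isOpen_lt hdist hτ))
    (fun x hx ↦ ⟨hKU hx, ((rank_le_iff (hb x)).1 (hrank x hx).le).trans_lt (hτK x hx)⟩) hτ
    (fun x ↦ threshold_nonneg j (b x)) hτK
  obtain ⟨w, hw⟩ := exists_forall_mulVec_ne_zero hX he
    (continuous_correction (j + e) b.continuous (fun x ↦ (hb x).1) hτ ε.continuous)
    (isLindelof_setOf_pos ε.continuous) fun x hx ↦ by
      have := lt_rank_correction_add (hb x) hx (hεW x hx).2 (hUn x (hεW x hx).1)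
      omega
  refine ⟨⟨_, continuous_raise (j + e) b.continuous (fun x ↦ (hb x).1) hτ ε.continuous
    w.continuous⟩, fun x ↦ posSemidef_raise _ _ _ _ _, fun x ↦ ?_⟩
  rcases (hετ x).1.eq_or_lt with hx | hx
  · refine .inl ⟨fun hxK ↦ (hεK x hxK).ne hx, ?_⟩
    rw [ContinuousMap.coe_mk, ← hx, raise_zero (hb x)]
  · refine .inr ⟨(hεW x hx).1, ?_, rank_raise_le (hb x) hx⟩
    exact (le_rank_cutDown_threshold (hb x) (hx.trans_le (hετ x).2)).trans_lt
      (rank_cutDown_lt_rank_raise (hετ x).2 (hw x hx))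

theorem exists_min_succ_le_rank (hX : HasCovDimLE X d) (he : d < (e + 1) * Module.finrank ℝ 𝕜)
    {Y : Set X} (hY : IsClosed Y) {f g : X → ℕ} (hf : LowerSemicontinuous f)
    (hg : UpperSemicontinuous g) (hfg : ∀ x, g x + e ≤ f x) (hfn : ∀ x, f x ≤ Fintype.card n)
    (b : C(X, Matrix n n 𝕜)) (hb : ∀ x, (b x).PosSemidef) (hbY : ∀ y ∈ Y, g y ≤ (b y).rank)
    (hbf : ∀ x, (b x).rank ≤ f x) (hbg : ∀ x, min (g x) j ≤ (b x).rank) :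
    ∃ b' : C(X, Matrix n n 𝕜), (∀ x, (b' x).PosSemidef) ∧ (∀ y ∈ Y, b' y = b y) ∧
      (∀ x, (b' x).rank ≤ f x) ∧ ∀ x, min (g x) (j + 1) ≤ (b' x).rank := by
  classical
  let K : Set X := {x | (b x).rank ≤ j} ∩ g ⁻¹' Set.Ici (j + 1)
  have hK : IsClosed K := by
    refine .inter ?_ (hg.isClosed_preimage (j + 1))
    simp only [rank_le_iff (hb _)]
    exact isClosed_le ((continuous_rankDist j).comp b.continuous) continuous_const
  have hKY : ∀ x ∈ K, x ∉ Y := fun x ⟨hxj, hxg⟩ hxY ↦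
    (hxg.trans (hbY x hxY)).not_gt (Nat.lt_succ_of_le hxj)
  obtain ⟨b', hb', hbb'⟩ := exists_lt_rank_and_rank_le_max (j := j) hX he b hb hK
    (hY.isOpen_compl.inter (hf.isOpen_preimage (j + e)))
    (fun x hx ↦ ⟨hKY x hx, (Nat.add_lt_add_right hx.2 e).trans_le (hfg x)⟩)
    (fun x ⟨hxj, hxg⟩ ↦ le_antisymm hxj (by simpa [Nat.le_of_succ_le hxg] using hbg x))
    fun x hx ↦ hx.2.trans_le (hfn x)
  refine ⟨b', hb', fun y hy ↦ ?_, fun x ↦ ?_, fun x ↦ ?_⟩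
  · exact (hbb' y).elim And.right fun h ↦ absurd hy h.1.1
  · rcases hbb' x with ⟨-, h⟩ | ⟨⟨-, hxf⟩, -, h⟩
    · exact h ▸ hbf x
    · exact h.trans (max_le (hbf x) (Nat.succ_le_of_lt hxf))
  · rcases hbb' x with ⟨hxK, h⟩ | ⟨-, h, -⟩
    · have := hbg x
      have : j < (b x).rank ∨ g x ≤ j := by
        by_contra! hx
        exact hxK hx
      rw [h]
      omega
    · exact min_le_of_right_le h

end Extension

end RankExtension

theorem stmt8_general {𝕜 : Type*} [RCLike 𝕜] {n : Type*} [Fintype n] {X : Type*}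
    [TopologicalSpace X] [CompactSpace X] [T2Space X] {d e : ℕ} (hX : HasCovDimLE X d)
    (he : d < (e + 1) * Module.finrank ℝ 𝕜) {Y : Set X} (hY : IsClosed Y) {f g : X → ℕ}
    (hf : LowerSemicontinuous f) (hg : UpperSemicontinuous g) (hfg : ∀ x, g x + e ≤ f x)
    (hfn : ∀ x, f x ≤ Fintype.card n) (a : C(Y, Matrix n n 𝕜)) (ha : ∀ y, (a y).PosSemidef)
    (harank : ∀ y : Y, g y ≤ (a y).rank ∧ (a y).rank ≤ f y) :
    ∃ b : C(X, Matrix n n 𝕜), (∀ x, (b x).PosSemidef) ∧ (∀ y (hy : y ∈ Y), b y = a ⟨y, hy⟩) ∧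
      ∀ x, g x ≤ (b x).rank ∧ (b x).rank ≤ f x := by
  have hraise : ∀ j, ∃ b : C(X, Matrix n n 𝕜), (∀ x, (b x).PosSemidef) ∧ (∀ y : Y, b y = a y) ∧
      (∀ x, (b x).rank ≤ f x) ∧ ∀ x, min (g x) j ≤ (b x).rank := fun j ↦ by
    induction j with
    | zero =>
      obtain ⟨b, hb, hba, hbf⟩ := RankExtension.exists_posSemidef_extension_rank_le hY hf a ha
        fun y ↦ (harank y).2
      exact ⟨b, hb, hba, hbf, fun x ↦ by simp⟩
    | succ j ih =>
      obtain ⟨b, hb, hba, hbf, hbg⟩ := ih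
      obtain ⟨b', hb', hbb', hbf', hbg'⟩ := RankExtension.exists_min_succ_le_rank hX he hY hf hg hfg
        hfn b hb (fun y hy ↦ hba ⟨y, hy⟩ ▸ (harank ⟨y, hy⟩).1) hbf hbg
      exact ⟨b', hb', fun y ↦ (hbb' y y.2).trans (hba y), hbf', hbg'⟩
  obtain ⟨b, hb, hba, hbf, hbg⟩ := hraise (Fintype.card n)
  refine ⟨b, hb, fun y hy ↦ hba ⟨y, hy⟩, fun x ↦ ⟨?_, hbf x⟩⟩
  have hgn : g x ≤ Fintype.card n := (Nat.le_of_add_right_le (hfg x)).trans (hfn x)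
  simpa [hgn] using hbg x

/-- Rank-constrained extension from a closed subset `Y` of a compact metric
space `X` of covering dimension `d`: if `f` is lower semicontinuous, `g` upper
semicontinuous, `f - g ≥ 4d`, `f ≤ n`, and `a ∈ M_n(C(Y))` is positive with
`g ≤ rank(a(·)) ≤ f` on `Y`, then `a` extends to a positive `b ∈ M_n(C(X))` with
`g ≤ rank(b(·)) ≤ f` on all of `X`. -/
theorem stmt8 {X : Type*} [MetricSpace X] [CompactSpace X] (d : ℕ) (hdim : IsCovDim X d)
    (Y : Set X) (hY : IsClosed Y)
    (n : ℕ) (hn : 0 < n) (f g : X → ℕ)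
    (hfbdd : ∃ C : ℕ, ∀ x, f x ≤ C) (hgbdd : ∃ C : ℕ, ∀ x, g x ≤ C)
    (hf : LowerSemicontinuous f) (hg : UpperSemicontinuous g)
    (hfg : ∀ x, g x + 4 * d ≤ f x) (hfn : ∀ x, f x ≤ n)
    (a : C(Y, Matrix (Fin n) (Fin n) ℂ)) (ha : ∀ y, (a y).PosSemidef)
    (harank : ∀ y : Y, g y.1 ≤ (a y).rank ∧ (a y).rank ≤ f y.1) :
    ∃ b : C(X, Matrix (Fin n) (Fin n) ℂ),
      (∀ x, (b x).PosSemidef) ∧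
      (∀ (y : X) (hy : y ∈ Y), b y = a ⟨y, hy⟩) ∧
      (∀ x : X, g x ≤ (b x).rank ∧ (b x).rank ≤ f x) :=
  stmt8_general (e := 4 * d) hdim.1 (by rw [Complex.finrank_real_complex]; omega) hY hf hg hfg
    (by simpa using hfn) a ha harank
end

section
/- Let X be a topological space, let α : X → ℝ be bounded and continuous, and let n be a positive integer. Then: (1) there exists a largest lower semicontinuous function underline_α_n : X → ℝ taking values in {k/n : k ∈ ℤ} with underline_α_n ≤ α pointwise, i.e., underline_α_n is lower semicontinuous, takes values in (1/n)ℤ, satisfies underline_α_n ≤ α, and every lower semicontinuous function with values in (1/n)ℤ that is ≤ α pointwise is ≤ underline_α_n pointwise; (2) there exists a smallest upper semicontinuous function overline_α_n : X → ℝ taking values in {k/n : k ∈ ℤ} with overline_α_n ≥ α pointwise. -/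
/-!
At each point, `liminf f (𝓝 x)` gives the largest lower semicontinuous function below a locally
bounded below function `f`, in any conditionally complete linear order. In `ℤ` this makes the
regularization of `⌊α * c⌋` again integer valued, and the Galois connection between `k ↦ k / c` and
`y ↦ ⌊y * c⌋` turns it into the largest lower semicontinuous function below `α` with values in
`(1/c)ℤ`. The upper semicontinuous half is the same statement in the dual orders.
-/

open Filter Set Topology

section Envelope

variable {X ι : Type*} [TopologicalSpace X] [ConditionallyCompleteLinearOrder ι]
  {f g : X → ι} {x : X}

theorem isCoboundedUnder_ge_nhds (f : X → ι) (x : X) : (𝓝 x).IsCoboundedUnder (· ≥ ·) f :=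
  ⟨f x, fun _ ha ↦ (eventually_map.1 ha).self_of_nhds⟩

theorem liminf_nhds_le (hf : (𝓝 x).IsBoundedUnder (· ≥ ·) f) : liminf f (𝓝 x) ≤ f x :=
  liminf_le_of_le hf fun _ hb ↦ hb.self_of_nhds

theorem lowerSemicontinuous_liminf_nhds (hf : ∀ x, (𝓝 x).IsBoundedUnder (· ≥ ·) f) :
    LowerSemicontinuous fun x ↦ liminf f (𝓝 x) := by
  intro x y hy
  obtain ⟨a, ha, hya⟩ : ∃ a ∈ {a | ∀ᶠ z in 𝓝 x, a ≤ f z}, y < a :=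
    exists_lt_of_lt_csSup (hf x) (liminf_eq.subst hy)
  filter_upwards [eventually_eventually_nhds.2 ha] with z hz
  exact hya.trans_le (le_liminf_of_le (isCoboundedUnder_ge_nhds f z) hz)

theorem le_liminf_nhds_of_lowerSemicontinuousAt (hg : LowerSemicontinuousAt g x)
    (hgf : g ≤ᶠ[𝓝 x] f) : g x ≤ liminf f (𝓝 x) := by
  have le_liminf {a : ι} (ha : ∀ᶠ z in 𝓝 x, a ≤ g z) : a ≤ liminf f (𝓝 x) :=
    le_liminf_of_le (isCoboundedUnder_ge_nhds f x) <| by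
      filter_upwards [ha, hgf] with z using le_trans
  by_contra! hlt
  -- `ι` need not be densely ordered: `g x` may cover `liminf f (𝓝 x)`.
  by_cases hbetween : ∃ a, liminf f (𝓝 x) < a ∧ a < g x
  · obtain ⟨a, hla, hag⟩ := hbetween
    exact hla.not_ge (le_liminf ((hg a hag).mono fun _ ↦ le_of_lt))
  · push Not at hbetween
    exact hlt.not_ge (le_liminf ((hg _ hlt).mono fun z ↦ hbetween (g z)))

theorem isGreatest_liminf_nhds (hf : ∀ x, (𝓝 x).IsBoundedUnder (· ≥ ·) f) :
    IsGreatest {g | LowerSemicontinuous g ∧ g ≤ f} fun x ↦ liminf f (𝓝 x) :=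
  ⟨⟨lowerSemicontinuous_liminf_nhds hf, fun x ↦ liminf_nhds_le (hf x)⟩,
    fun _ hg x ↦ le_liminf_nhds_of_lowerSemicontinuousAt (hg.1 x) (.of_forall hg.2)⟩

end Envelope

section GaloisConnection

variable {X ι β : Type*} [TopologicalSpace X]

theorem lowerSemicontinuous_comp_of_galoisConnection [LinearOrder ι] [LinearOrder β]
    {l : ι → β} {u : β → ι} (gc : GaloisConnection l u) {f : X → ι}
    (hf : LowerSemicontinuous f) : LowerSemicontinuous (l ∘ f) := fun x y hy ↦
  (hf x (u y) (gc.lt_iff_lt.1 hy)).mono fun _ ↦ gc.lt_iff_lt.2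

theorem lowerSemicontinuous_of_strictMono_comp [LinearOrder ι] [Preorder β] {φ : ι → β}
    (hφ : StrictMono φ) {f : X → ι} (hf : LowerSemicontinuous (φ ∘ f)) :
    LowerSemicontinuous f := fun x y hy ↦
  (hf x (φ y) (hφ hy)).mono fun _ ↦ hφ.lt_iff_lt.1

variable [ConditionallyCompleteLinearOrder ι] [LinearOrder β] {α : X → β}

theorem isGreatest_comp_liminf_nhds {l : ι → β} {u : β → ι} (gc : GaloisConnection l u)
    (hl : StrictMono l) (hα : ∀ x, (𝓝 x).IsBoundedUnder (· ≥ ·) α) :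
    IsGreatest {v | LowerSemicontinuous v ∧ (∀ x, v x ∈ range l) ∧ v ≤ α}
      fun x ↦ l (liminf (u ∘ α) (𝓝 x)) := by
  obtain ⟨⟨hlsc, hle⟩, hmax⟩ :=
    isGreatest_liminf_nhds fun x ↦ gc.monotone_u.isBoundedUnder_ge_comp (hα x)
  refine ⟨⟨lowerSemicontinuous_comp_of_galoisConnection gc hlsc, fun x ↦ mem_range_self _,
    fun x ↦ gc.l_le (hle x)⟩, ?_⟩
  rintro v ⟨hv, hrange, hvα⟩
  obtain ⟨k, rfl⟩ : ∃ k : X → ι, l ∘ k = v := (Classical.skolem.1 hrange).imp fun _ ↦ funext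
  have hk : k ≤ u ∘ α := fun x ↦ gc.le_u (hvα x)
  exact fun x ↦ gc.monotone_l (hmax ⟨lowerSemicontinuous_of_strictMono_comp hl hv, hk⟩ x)

theorem isLeast_comp_limsup_nhds {l : β → ι} {u : ι → β} (gc : GaloisConnection l u)
    (hu : StrictMono u) (hα : ∀ x, (𝓝 x).IsBoundedUnder (· ≤ ·) α) :
    IsLeast {w | UpperSemicontinuous w ∧ (∀ x, w x ∈ range u) ∧ α ≤ w}
      fun x ↦ u (limsup (l ∘ α) (𝓝 x)) :=
  isGreatest_comp_liminf_nhds (ι := ιᵒᵈ) (β := βᵒᵈ) gc.dual hu.dual hα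

end GaloisConnection

section Lattice

variable {K : Type*} [Field K] [LinearOrder K] [IsStrictOrderedRing K] {c : K}

theorem strictMono_intCast_div (hc : 0 < c) : StrictMono fun k : ℤ ↦ (k : K) / c :=
  fun _ _ h ↦ div_lt_div_of_pos_right (Int.cast_lt.2 h) hc

variable [FloorRing K]

theorem galoisConnection_intCast_div_floor (hc : 0 < c) :
    GaloisConnection (fun k : ℤ ↦ (k : K) / c) fun y ↦ ⌊y * c⌋ := fun _ _ ↦
  (div_le_iff₀ hc).trans Int.le_floor.symm

theorem galoisConnection_ceil_intCast_div (hc : 0 < c) :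
    GaloisConnection (fun y ↦ ⌈y * c⌉) fun k : ℤ ↦ (k : K) / c := fun _ _ ↦
  Int.ceil_le.trans (le_div_iff₀ hc).symm

end Lattice

theorem stmt9_general {X K : Type*} [TopologicalSpace X] [Field K] [LinearOrder K]
    [IsStrictOrderedRing K] [FloorRing K] (α : X → K)
    (hbelow : ∀ x, (𝓝 x).IsBoundedUnder (· ≥ ·) α)
    (habove : ∀ x, (𝓝 x).IsBoundedUnder (· ≤ ·) α) (c : K) (hc : 0 < c) :
    (∃ u : X → K, LowerSemicontinuous u ∧ (∀ x, ∃ k : ℤ, u x = (k : K) / c) ∧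
      (∀ x, u x ≤ α x) ∧
      ∀ v : X → K, LowerSemicontinuous v → (∀ x, ∃ k : ℤ, v x = (k : K) / c) →
        (∀ x, v x ≤ α x) → ∀ x, v x ≤ u x) ∧
    (∃ o : X → K, UpperSemicontinuous o ∧ (∀ x, ∃ k : ℤ, o x = (k : K) / c) ∧
      (∀ x, α x ≤ o x) ∧
      ∀ w : X → K, UpperSemicontinuous w → (∀ x, ∃ k : ℤ, w x = (k : K) / c) →
        (∀ x, α x ≤ w x) → ∀ x, o x ≤ w x) := by
  have hmono := strictMono_intCast_div hc
  obtain ⟨⟨hu, hur, huα⟩, hmax⟩ :=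
    isGreatest_comp_liminf_nhds (galoisConnection_intCast_div_floor hc) hmono hbelow
  obtain ⟨⟨ho, hor, hαo⟩, hmin⟩ :=
    isLeast_comp_limsup_nhds (galoisConnection_ceil_intCast_div hc) hmono habove
  exact ⟨⟨_, hu, fun x ↦ (hur x).imp fun _ ↦ Eq.symm, huα,
      fun v hv hvr hvα ↦ hmax ⟨hv, fun x ↦ (hvr x).imp fun _ ↦ Eq.symm, hvα⟩⟩,
    ⟨_, ho, fun x ↦ (hor x).imp fun _ ↦ Eq.symm, hαo,
      fun w hw hwr hαw ↦ hmin ⟨hw, fun x ↦ (hwr x).imp fun _ ↦ Eq.symm, hαw⟩⟩⟩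

/-- For a bounded continuous `α : X → ℝ` and `n ≥ 1`, there exist (1) a largest
lower semicontinuous function with values in `(1/n)ℤ` lying below `α`, and (2) a smallest
upper semicontinuous function with values in `(1/n)ℤ` lying above `α`. -/
theorem stmt9 {X : Type*} [TopologicalSpace X] (α : X → ℝ) (hα : Continuous α)
    (hbdd : ∃ C : ℝ, ∀ x, |α x| ≤ C) (n : ℕ) (hn : 0 < n) :
    (∃ u : X → ℝ, LowerSemicontinuous u ∧ (∀ x, ∃ k : ℤ, u x = (k : ℝ) / n) ∧
      (∀ x, u x ≤ α x) ∧
      ∀ v : X → ℝ, LowerSemicontinuous v → (∀ x, ∃ k : ℤ, v x = (k : ℝ) / n) →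
        (∀ x, v x ≤ α x) → ∀ x, v x ≤ u x) ∧
    (∃ o : X → ℝ, UpperSemicontinuous o ∧ (∀ x, ∃ k : ℤ, o x = (k : ℝ) / n) ∧
      (∀ x, α x ≤ o x) ∧
      ∀ w : X → ℝ, UpperSemicontinuous w → (∀ x, ∃ k : ℤ, w x = (k : ℝ) / n) →
        (∀ x, α x ≤ w x) → ∀ x, o x ≤ w x) :=
  stmt9_general α (fun x ↦ (hα.tendsto x).isBoundedUnder_ge)
    (fun x ↦ (hα.tendsto x).isBoundedUnder_le) n (Nat.cast_pos.2 hn)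
end

section
/- Let X be a topological space, let α : X → ℝ be bounded and continuous, and let n be a positive integer. Let underline_α_n be the largest lower semicontinuous function on X with values in {k/n : k ∈ ℤ} satisfying underline_α_n ≤ α pointwise, and let overline_α_n be the smallest upper semicontinuous function on X with values in {k/n : k ∈ ℤ} satisfying overline_α_n ≥ α pointwise. Then for every x ∈ X, 0 ≤ α(x) − underline_α_n(x) < 2/n and 0 ≤ overline_α_n(x) − α(x) < 2/n. -/
/-!
Send `x` to the largest multiple of `ε` *strictly* below `α x`. This is a lower semicontinuous
function: if `k • ε < α x`, then `k • ε < α y` for all `y` near `x`. (With `≤` in place of `<` this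
can fail where `α` attains a multiple of `ε`.) So the largest lower semicontinuous minorant lies
above it, hence within `ε` of `α`. The majorant is handled by passing to `-α`.
-/

section Semicontinuous

variable {X G : Type*} [TopologicalSpace X]

theorem lowerSemicontinuous_of_isGreatest_inter_Iio [Preorder G] {S : Set G} {f r : X → G}
    (hf : LowerSemicontinuous f) (hr : ∀ x, IsGreatest (S ∩ Set.Iio (f x)) (r x)) :
    LowerSemicontinuous r := by
  intro x y hy
  filter_upwards [hf x (r x) (hr x).1.2] with t ht
  exact hy.trans_le ((hr t).2 ⟨(hr x).1.1, ht⟩)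

/-- The lower semicontinuous functions with values in `S` that lie pointwise below `f`; the
function `underline_α_n` is the greatest element for `f = α` and `S = (1/n)ℤ`. -/
def lscMinorants [Preorder G] (S : Set G) (f : X → G) : Set (X → G) :=
  {v | LowerSemicontinuous v ∧ (∀ x, v x ∈ S) ∧ ∀ x, v x ≤ f x}

/-- The upper semicontinuous functions with values in `S` that lie pointwise above `f`; the
function `overline_α_n` is the least element for `f = α` and `S = (1/n)ℤ`. -/
def uscMajorants [Preorder G] (S : Set G) (f : X → G) : Set (X → G) :=
  {w | UpperSemicontinuous w ∧ (∀ x, w x ∈ S) ∧ ∀ x, f x ≤ w x}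

theorem mem_lscMinorants_of_isGreatest_inter_Iio [Preorder G] {S : Set G} {f r : X → G}
    (hf : LowerSemicontinuous f) (hr : ∀ x, IsGreatest (S ∩ Set.Iio (f x)) (r x)) :
    r ∈ lscMinorants S f :=
  ⟨lowerSemicontinuous_of_isGreatest_inter_Iio hf hr, fun x => (hr x).1.1,
    fun x => (hr x).1.2.le⟩

variable [AddCommGroup G] [PartialOrder G] [IsOrderedAddMonoid G]
  {S : AddSubgroup G} {f o w : X → G}

theorem neg_mem_lscMinorants_neg_iff : -w ∈ lscMinorants (S : Set G) (-f) ↔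
    w ∈ uscMajorants (S : Set G) f := by
  simp [lscMinorants, uscMajorants]

theorem isGreatest_lscMinorants_neg_of_isLeast_uscMajorants
    (ho : IsLeast (uscMajorants (S : Set G) f) o) :
    IsGreatest (lscMinorants (S : Set G) (-f)) (-o) := by
  refine ⟨neg_mem_lscMinorants_neg_iff.2 ho.1, fun v hv => le_neg_of_le_neg (ho.2 ?_)⟩
  rwa [← neg_mem_lscMinorants_neg_iff, neg_neg]

end Semicontinuous

section Archimedean

open AddSubgroup (zmultiples)

variable {X G : Type*} [TopologicalSpace X] [AddCommGroup G] [LinearOrder G]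
  [IsOrderedAddMonoid G] [Archimedean G] {ε : G} {α u o : X → G}

theorem isGreatest_zmultiples_inter_Iio_toIocDiv_zsmul (hε : 0 < ε) (a : G) :
    IsGreatest (zmultiples ε ∩ Set.Iio a) (toIocDiv hε 0 a • ε) := by
  obtain ⟨hpos, hle⟩ := sub_toIocDiv_zsmul_mem_Ioc hε 0 a
  refine ⟨⟨AddSubgroup.zsmul_mem_zmultiples ε _, sub_pos.1 hpos⟩, ?_⟩
  rintro _ ⟨⟨k, rfl⟩, hk : k • ε < a⟩
  have hlt : k • ε < (toIocDiv hε 0 a + 1) • ε := by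
    rw [zero_add, sub_le_iff_le_add'] at hle
    simpa only [add_one_zsmul] using hk.trans_le hle
  exact zsmul_le_zsmul_left hε.le (Int.lt_add_one_iff.1 ((zsmul_lt_zsmul_iff_left hε).1 hlt))

theorem sub_mem_Icc_of_isGreatest_lscMinorants (hε : 0 < ε) (hα : LowerSemicontinuous α)
    (hu : IsGreatest (lscMinorants (zmultiples ε : Set G) α) u) (x : X) :
    α x - u x ∈ Set.Icc 0 ε := by
  have hround : toIocDiv hε 0 (α x) • ε ≤ u x :=
    hu.2 (mem_lscMinorants_of_isGreatest_inter_Iio hα fun y =>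
      isGreatest_zmultiples_inter_Iio_toIocDiv_zsmul hε (α y)) x
  refine ⟨sub_nonneg.2 (hu.1.2.2 x), (sub_le_sub_left hround _).trans ?_⟩
  simpa only [zero_add] using (sub_toIocDiv_zsmul_mem_Ioc hε 0 (α x)).2

theorem sub_mem_Icc_of_isLeast_uscMajorants (hε : 0 < ε) (hα : UpperSemicontinuous α)
    (ho : IsLeast (uscMajorants (zmultiples ε : Set G) α) o) (x : X) :
    o x - α x ∈ Set.Icc 0 ε := by
  simpa only [Pi.neg_apply, neg_sub_neg] using sub_mem_Icc_of_isGreatest_lscMinorants hε hα.neg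
    (isGreatest_lscMinorants_neg_of_isLeast_uscMajorants ho) x

end Archimedean

theorem coe_zmultiples_one_div_natCast {K : Type*} [DivisionRing K] (n : ℕ) :
    (AddSubgroup.zmultiples (1 / n : K) : Set K) = {r : K | ∃ k : ℤ, r = k / n} := by
  ext r
  simp [AddSubgroup.mem_zmultiples_iff, div_eq_mul_inv, eq_comm]

theorem stmt11_general {X K : Type*} [TopologicalSpace X] [Field K] [LinearOrder K]
    [IsStrictOrderedRing K] [Archimedean K] {n : ℕ} (hn : 0 < n) {α u o : X → K}
    (hα_lower : LowerSemicontinuous α) (hα_upper : UpperSemicontinuous α)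
    (hu : IsGreatest (lscMinorants {r : K | ∃ k : ℤ, r = k / n} α) u)
    (ho : IsLeast (uscMajorants {r : K | ∃ k : ℤ, r = k / n} α) o) (x : X) :
    α x - u x ∈ Set.Icc 0 (1 / n : K) ∧ o x - α x ∈ Set.Icc 0 (1 / n : K) := by
  have hε : 0 < (1 / n : K) := Nat.one_div_cast_pos hn.ne'
  rw [← coe_zmultiples_one_div_natCast] at hu ho
  exact ⟨sub_mem_Icc_of_isGreatest_lscMinorants hε hα_lower hu x,
    sub_mem_Icc_of_isLeast_uscMajorants hε hα_upper ho x⟩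

/-- Let `α : X → ℝ` be bounded and continuous, let `u` be the largest lower
semicontinuous `(1/n)ℤ`-valued function below `α`, and let `o` be the smallest upper
semicontinuous `(1/n)ℤ`-valued function above `α`.  Then pointwise
`0 ≤ α - u < 2/n` and `0 ≤ o - α < 2/n`. -/
theorem stmt11 {X : Type*} [TopologicalSpace X] (α : X → ℝ) (hα : Continuous α)
    (hbdd : ∃ C : ℝ, ∀ x, |α x| ≤ C) (n : ℕ) (hn : 0 < n)
    (u : X → ℝ) (hu : LowerSemicontinuous u) (huval : ∀ x, ∃ k : ℤ, u x = (k : ℝ) / n)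
    (humin : ∀ x, u x ≤ α x)
    (humax : ∀ v : X → ℝ, LowerSemicontinuous v → (∀ x, ∃ k : ℤ, v x = (k : ℝ) / n) →
      (∀ x, v x ≤ α x) → ∀ x, v x ≤ u x)
    (o : X → ℝ) (ho : UpperSemicontinuous o) (hoval : ∀ x, ∃ k : ℤ, o x = (k : ℝ) / n)
    (homaj : ∀ x, α x ≤ o x)
    (homin : ∀ w : X → ℝ, UpperSemicontinuous w → (∀ x, ∃ k : ℤ, w x = (k : ℝ) / n) →
      (∀ x, α x ≤ w x) → ∀ x, o x ≤ w x) :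
    ∀ x : X, (0 ≤ α x - u x ∧ α x - u x < 2 / n) ∧
      (0 ≤ o x - α x ∧ o x - α x < 2 / n) := by
  intro x
  have hlt : (1 : ℝ) / n < 2 / n := div_lt_div_of_pos_right one_lt_two (Nat.cast_pos.2 hn)
  have hclose := stmt11_general hn hα.lowerSemicontinuous hα.upperSemicontinuous
    ⟨⟨hu, huval, humin⟩, fun v ⟨hv, hvval, hvmin⟩ => humax v hv hvval hvmin⟩
    ⟨⟨ho, hoval, homaj⟩, fun w ⟨hw, hwval, hwmaj⟩ => homin w hw hwval hwmaj⟩ x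
  exact hclose.imp (And.imp_right hlt.trans_le') (And.imp_right hlt.trans_le')
end

section
/- Let X be a compact metric space, let Y ⊆ X be closed, and let n be a positive integer. Let g : X → ℤ≥0 be bounded and upper semicontinuous, and let a ∈ M_n(C(Y)) be positive with rank(a(y)) ≥ g(y) for all y ∈ Y. Then there exist an open set U ⊇ Y and a positive element ã of C_b(U, M_n(ℂ)) such that ã restricted to Y equals a and rank(ã(z)) ≥ g(z) for all z ∈ U. -/
open scoped ComplexOrder

/-!
The map `A ↦ |A|` retracts the matrices continuously onto the positive semidefinite ones, so by
Tietze `a` extends to a continuous positive semidefinite `b` on all of `X`. Let `f ≥ 0` be a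
continuous function with zero set exactly `Y`. Adding `f • 1` to `b` does not change it on `Y` and
makes it positive definite, hence of full rank, off `Y`. Since `g` is at most the matrix size on
`Y`, upper semicontinuity gives the same bound on a neighbourhood of `Y`, where the rank inequality
therefore holds; shrinking this neighbourhood keeps `b` bounded when `a` is.
-/

section Extension

variable {ι 𝕜 : Type*} [RCLike 𝕜]

open scoped MatrixOrder Matrix.Norms.L2Operator in
theorem exists_retraction_setOf_posSemidef [Finite ι] :
    ∃ r : C(Matrix ι ι 𝕜, {A : Matrix ι ι 𝕜 | A.PosSemidef}), ∀ A, r A.1 = A := by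
  classical
  cases nonempty_fintype ι
  -- Matrices with the `ℓ²` operator norm come as a normed algebra over `𝕜`; `CFC.continuous_abs`
  -- wants one over `ℝ`.
  let : NormedAlgebra ℝ (Matrix ι ι 𝕜) :=
    { norm_smul_le r A := by
        rw [RCLike.real_smul_eq_coe_smul (K := 𝕜) r A, norm_smul, RCLike.norm_ofReal,
          Real.norm_eq_abs] }
  have h_abs : Continuous (CFC.abs : Matrix ι ι 𝕜 → Matrix ι ι 𝕜) :=
    CFC.continuous_abs (A := Matrix ι ι 𝕜)
  exact ⟨⟨fun A ↦ ⟨CFC.abs A, Matrix.nonneg_iff_posSemidef.mp (CFC.abs_nonneg A)⟩,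
    h_abs.subtype_mk _⟩, fun A ↦ Subtype.ext (CFC.abs_of_nonneg A.1 A.2.nonneg)⟩

theorem tietzeExtension_setOf_posSemidef [Finite ι] :
    TietzeExtension {A : Matrix ι ι 𝕜 | A.PosSemidef} := by
  have : TietzeExtension (Matrix ι ι 𝕜) := TietzeExtension.of_tvs 𝕜
  obtain ⟨r, hr⟩ := exists_retraction_setOf_posSemidef (ι := ι) (𝕜 := 𝕜)
  exact .of_retract ⟨Subtype.val, continuous_subtype_val⟩ r (ContinuousMap.ext hr)

variable {X : Type*} [TopologicalSpace X] {Y : Set X}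

theorem exists_continuousMap_zero_on_pos_compl [PerfectlyNormalSpace X] (hY : IsClosed Y) :
    ∃ f : C(X, ℝ), (∀ x ∈ Y, f x = 0) ∧ ∀ x ∉ Y, 0 < f x := by
  obtain ⟨f, rfl, hf⟩ :=
    perfectlyNormalSpace_iff_forall_isClosed_preimage_zero.mp inferInstance Y hY
  exact ⟨f, fun _ hx ↦ hx, fun x hx ↦ (hf x).1.lt_of_ne' hx⟩

theorem exists_extension_posSemidef_posDef_compl [Finite ι] [PerfectlyNormalSpace X]
    (hY : IsClosed Y) (a : C(Y, Matrix ι ι 𝕜)) (ha : ∀ y, (a y).PosSemidef) :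
    ∃ b : C(X, Matrix ι ι 𝕜),
      (∀ y : Y, b y = a y) ∧ (∀ x, (b x).PosSemidef) ∧ ∀ x ∉ Y, (b x).PosDef := by
  classical
  have := tietzeExtension_setOf_posSemidef (ι := ι) (𝕜 := 𝕜)
  obtain ⟨b, hb, hba⟩ := a.exists_forall_mem_restrict_eq hY (t := {A | A.PosSemidef}) ha
  obtain ⟨f, hf_zero, hf_pos⟩ := exists_continuousMap_zero_on_pos_compl hY
  let c : C(X, Matrix ι ι 𝕜) := ⟨fun x ↦ b x + (f x : 𝕜) • 1, by fun_prop⟩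
  have hc_eq : ∀ x ∈ Y, c x = b x := fun x hx ↦ by simp [c, hf_zero x hx]
  have hc_posDef : ∀ x ∉ Y, (c x).PosDef := fun x hx ↦
    .posSemidef_add (hb x) (Matrix.PosDef.one.smul (RCLike.ofReal_pos.mpr (hf_pos x hx)))
  refine ⟨c, fun y ↦ (hc_eq y y.2).trans (DFunLike.congr_fun hba y), fun x ↦ ?_, hc_posDef⟩
  by_cases hx : x ∈ Y
  · exact hc_eq x hx ▸ hb x
  · exact (hc_posDef x hx).posSemidef

end Extension

section Entries

variable {X m n E : Type*} [TopologicalSpace X] [NormedAddCommGroup E]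

theorem exists_forall_norm_entry_le [Finite m] [Finite n] [CompactSpace X]
    (a : C(X, Matrix m n E)) : ∃ C : ℝ, ∀ x i j, ‖a x i j‖ ≤ C := by
  have h_compact : IsCompact (⋃ i, ⋃ j, Set.range fun x ↦ ‖a x i j‖) :=
    isCompact_iUnion fun i ↦ isCompact_iUnion fun j ↦
      isCompact_range (a.continuous.matrix_elem i j).norm
  obtain ⟨C, hC⟩ := h_compact.bddAbove
  exact ⟨C, fun x i j ↦ hC (Set.mem_iUnion₂.mpr ⟨i, j, x, rfl⟩)⟩

theorem isOpen_setOf_forall_norm_entry_lt [Finite m] [Finite n] (a : C(X, Matrix m n E)) (r : ℝ) :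
    IsOpen {x | ∀ i j, ‖a x i j‖ < r} := by
  simp only [Set.ofPred_forall]
  exact isOpen_iInter_of_finite fun i ↦ isOpen_iInter_of_finite fun j ↦
    isOpen_lt (a.continuous.matrix_elem i j).norm continuous_const

end Entries

theorem stmt14_general {X ι 𝕜 : Type*} [TopologicalSpace X] [PerfectlyNormalSpace X]
    [Fintype ι] [RCLike 𝕜] {Y : Set X} (hY : IsClosed Y) {g : X → ℕ} (hg : UpperSemicontinuous g)
    (a : C(Y, Matrix ι ι 𝕜)) (ha : ∀ y, (a y).PosSemidef)
    (ha_bdd : ∃ C : ℝ, ∀ y i j, ‖a y i j‖ ≤ C) (ha_rank : ∀ y : Y, g y ≤ (a y).rank) :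
    ∃ (U : Set X) (hYU : Y ⊆ U), IsOpen U ∧
      ∃ b : C(U, Matrix ι ι 𝕜),
        (∃ C : ℝ, ∀ (z : U) (i j : ι), ‖b z i j‖ ≤ C) ∧
        (∀ z : U, (b z).PosSemidef) ∧
        (∀ (y : X) (hy : y ∈ Y), b ⟨y, hYU hy⟩ = a ⟨y, hy⟩) ∧
        (∀ z : U, g z ≤ (b z).rank) := by
  classical
  obtain ⟨C, hC⟩ := ha_bdd
  obtain ⟨b, hba, hb, hb_posDef⟩ := exists_extension_posSemidef_posDef_compl hY a ha
  let U : Set X := {x | g x < Fintype.card ι + 1} ∩ {x | ∀ i j, ‖b x i j‖ < C + 1}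
  have hU : IsOpen U :=
    (hg.isOpen_preimage _).inter (isOpen_setOf_forall_norm_entry_lt b (C + 1))
  have hYU : Y ⊆ U := fun y hy ↦
    ⟨Nat.lt_succ_of_le ((ha_rank ⟨y, hy⟩).trans (Matrix.rank_le_card_width _)),
      fun i j ↦ hba ⟨y, hy⟩ ▸ (hC ⟨y, hy⟩ i j).trans_lt (lt_add_one C)⟩
  have hb_rank : ∀ z ∈ U, g z ≤ (b z).rank := fun z hz ↦ by
    by_cases hzY : z ∈ Y
    · exact hba ⟨z, hzY⟩ ▸ ha_rank ⟨z, hzY⟩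
    · rw [Matrix.rank_of_isUnit _ (hb_posDef z hzY).isUnit]
      exact Nat.le_of_lt_succ hz.1
  exact ⟨U, hYU, hU, b.restrict U, ⟨C + 1, fun z i j ↦ (z.2.2 i j).le⟩, fun z ↦ hb z,
    fun y hy ↦ hba ⟨y, hy⟩, fun z ↦ hb_rank z z.2⟩

/-- A positive `a ∈ M_n(C(Y))` on a closed subset `Y` of a compact metric
space `X`, whose pointwise rank dominates a bounded upper semicontinuous `g : X → ℤ≥0`,
extends to a bounded continuous positive `ã` on some open `U ⊇ Y` with
`rank(ã(z)) ≥ g(z)` for all `z ∈ U`. -/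
theorem stmt14 {X : Type*} [MetricSpace X] [CompactSpace X] (Y : Set X) (hY : IsClosed Y)
    (n : ℕ) (hn : 0 < n) (g : X → ℕ)
    (hgbdd : ∃ C : ℕ, ∀ x, g x ≤ C) (hg : UpperSemicontinuous g)
    (a : C(Y, Matrix (Fin n) (Fin n) ℂ)) (ha : ∀ y, (a y).PosSemidef)
    (harank : ∀ y : Y, g y.1 ≤ (a y).rank) :
    ∃ (U : Set X) (hYU : Y ⊆ U), IsOpen U ∧
      ∃ b : C(U, Matrix (Fin n) (Fin n) ℂ),
        (∃ C : ℝ, ∀ (z : U) (i j : Fin n), ‖b z i j‖ ≤ C) ∧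
        (∀ z : U, (b z).PosSemidef) ∧
        (∀ (y : X) (hy : y ∈ Y), b ⟨y, hYU hy⟩ = a ⟨y, hy⟩) ∧
        (∀ z : U, g z.1 ≤ (b z).rank) := by
  have : CompactSpace Y := isCompact_iff_compactSpace.mp hY.isCompact
  exact stmt14_general hY hg a ha (exists_forall_norm_entry_le a) harank
end

section
/- Let n be a positive integer, let η > 0, and let A, B ∈ M_n(ℂ) be positive semidefinite matrices with ‖A − B‖ < η in the operator norm. Then rank((A − η·1)₊) ≤ rank(B), where (A − η·1)₊ denotes the positive part of the Hermitian matrix A − η·1 (the matrix obtained by applying t ↦ max(t, 0) to its eigenvalues in a spectral decomposition). -/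
open scoped ComplexOrder

/-!
Let `A - η = U diag(λ) U*` and `P = (A - η)₊`. The range of `P` is spanned by the eigenvectors of
`A` with eigenvalue greater than `η`, so `A` stretches each of its nonzero vectors by a factor
greater than `η`. If `B x = 0`, then `‖A x‖ = ‖(A - B) x‖ ≤ η ‖x‖`. Hence the range of `P` meets
the kernel of `B` trivially, and `B` maps it injectively into the range of `B`.
-/

theorem finrank_le_finrank_range_of_disjoint_ker {K V W : Type*} [DivisionRing K]
    [AddCommGroup V] [Module K V] [AddCommGroup W] [Module K W] (f : V →ₗ[K] W)
    [FiniteDimensional K f.range] {p : Submodule K V} (h : Disjoint p f.ker) :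
    Module.finrank K p ≤ Module.finrank K f.range := by
  have hinj : Function.Injective (f.rangeRestrict.domRestrict p) := by
    rwa [LinearMap.injective_domRestrict_iff, LinearMap.ker_rangeRestrict]
  exact LinearMap.finrank_le_finrank_of_injective hinj

theorem disjoint_ker_of_opNorm_sub_mul_lt {𝕜 E F : Type*} [NontriviallyNormedField 𝕜]
    [SeminormedAddCommGroup E] [NormedSpace 𝕜 E] [SeminormedAddCommGroup F] [NormedSpace 𝕜 F]
    {T S : E →L[𝕜] F} {p : Submodule 𝕜 E}
    (h : ∀ x ∈ p, x ≠ 0 → ‖T - S‖ * ‖x‖ < ‖T x‖) :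
    Disjoint p S.toLinearMap.ker := by
  refine Submodule.disjoint_def.2 fun x hxp hSx ↦ by_contra fun hx ↦ ?_
  have hTx : (T - S) x = T x := by simpa using hSx
  exact (h x hxp hx).not_ge (hTx ▸ (T - S).le_opNorm x)

section Matrix

open Matrix

variable {𝕜 ι : Type*} [RCLike 𝕜] [Fintype ι] [DecidableEq ι]

theorem rank_eq_finrank_range_toEuclideanCLM (A : Matrix ι ι 𝕜) :
    A.rank = Module.finrank 𝕜 (toEuclideanCLM (𝕜 := 𝕜) A).toLinearMap.range := by
  rw [coe_toEuclideanCLM_eq_toEuclideanLin, toEuclideanLin, toLpLin_eq_toLin]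
  exact A.rank_eq_finrank_range_toLin _ _

theorem rank_le_rank_of_opNorm_sub_mul_lt {A B P : Matrix ι ι 𝕜}
    (h : ∀ x, toEuclideanCLM (𝕜 := 𝕜) P x ≠ 0 →
      ‖toEuclideanCLM (𝕜 := 𝕜) (A - B)‖ * ‖toEuclideanCLM (𝕜 := 𝕜) P x‖ <
        ‖toEuclideanCLM (𝕜 := 𝕜) (A * P) x‖) :
    P.rank ≤ B.rank := by
  rw [rank_eq_finrank_range_toEuclideanCLM, rank_eq_finrank_range_toEuclideanCLM]
  apply finrank_le_finrank_range_of_disjoint_ker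
  apply disjoint_ker_of_opNorm_sub_mul_lt (T := toEuclideanCLM (𝕜 := 𝕜) A)
  rintro _ ⟨x, rfl⟩ hx
  rw [← map_sub]
  exact (h x hx).trans_eq <| by rw [map_mul]; rfl

theorem mul_norm_lt_norm_toEuclideanCLM_diagonal {c : ℝ} {d : ι → 𝕜} {x : EuclideanSpace 𝕜 ι}
    (hx : x ≠ 0) (hd : ∀ i, x i ≠ 0 → c < ‖d i‖) :
    c * ‖x‖ < ‖toEuclideanCLM (𝕜 := 𝕜) (diagonal d) x‖ := by
  rcases lt_or_ge c 0 with hc | hc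
  · exact (mul_neg_of_neg_of_pos hc (norm_pos_iff.2 hx)).trans_le (norm_nonneg _)
  obtain ⟨j, hj⟩ : ∃ j, x j ≠ 0 := by
    by_contra! hzero
    exact hx (PiLp.ext hzero)
  have hlt : ∀ i, x i ≠ 0 → (c * ‖x i‖) ^ 2 < ‖d i * x i‖ ^ 2 := fun i hi ↦ by
    rw [norm_mul]
    gcongr
    exact hd i hi
  have hle : ∀ i, (c * ‖x i‖) ^ 2 ≤ ‖d i * x i‖ ^ 2 := fun i ↦ by
    rcases eq_or_ne (x i) 0 with hi | hi
    · simp [hi]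
    · exact (hlt i hi).le
  refine lt_of_pow_lt_pow_left₀ 2 (norm_nonneg _) ?_
  calc (c * ‖x‖) ^ 2 = ∑ i, (c * ‖x i‖) ^ 2 := by
        simp only [mul_pow, EuclideanSpace.norm_sq_eq, Finset.mul_sum]
    _ < ∑ i, ‖d i * x i‖ ^ 2 :=
        Finset.sum_lt_sum (fun i _ ↦ hle i) ⟨j, Finset.mem_univ j, hlt j hj⟩
    _ = ‖toEuclideanCLM (𝕜 := 𝕜) (diagonal d) x‖ ^ 2 := by
        simp only [EuclideanSpace.norm_sq_eq, ofLp_toEuclideanCLM, mulVec_diagonal]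

theorem norm_toEuclideanCLM_unitary_conj {U : Matrix ι ι 𝕜} (hU : U ∈ unitaryGroup ι 𝕜)
    (M : Matrix ι ι 𝕜) (x : EuclideanSpace 𝕜 ι) :
    ‖toEuclideanCLM (𝕜 := 𝕜) (U * M * star U) x‖ =
      ‖toEuclideanCLM (𝕜 := 𝕜) M (toEuclideanCLM (𝕜 := 𝕜) (star U) x)‖ := by
  rw [map_mul, map_mul]
  exact ContinuousLinearMap.norm_map_of_mem_unitary
    (Unitary.map_mem (toEuclideanCLM (𝕜 := 𝕜) (n := ι)) hU) _

theorem rank_unitary_conj_diagonal_le_rank {U B : Matrix ι ι 𝕜} (hU : U ∈ unitaryGroup ι 𝕜)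
    {d e : ι → 𝕜}
    (h : ∀ i, e i ≠ 0 → ‖toEuclideanCLM (𝕜 := 𝕜) (U * diagonal d * star U - B)‖ < ‖d i‖) :
    (U * diagonal e * star U).rank ≤ B.rank := by
  apply rank_le_rank_of_opNorm_sub_mul_lt (A := U * diagonal d * star U)
  intro x hx
  have hprod : U * diagonal d * star U * (U * diagonal e * star U) =
      U * (diagonal d * diagonal e) * star U := by
    simp only [Matrix.mul_assoc]
    rw [← Matrix.mul_assoc (star U) U, mem_unitaryGroup_iff'.1 hU, Matrix.one_mul]
  set y := toEuclideanCLM (𝕜 := 𝕜) (diagonal e) (toEuclideanCLM (𝕜 := 𝕜) (star U) x) with hy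
  have hnorm_y : ‖toEuclideanCLM (𝕜 := 𝕜) (U * diagonal e * star U) x‖ = ‖y‖ :=
    norm_toEuclideanCLM_unitary_conj hU _ x
  have hy_ne : y ≠ 0 := by
    rwa [← norm_ne_zero_iff, ← hnorm_y, norm_ne_zero_iff]
  have hy_supp : ∀ i, y i ≠ 0 → e i ≠ 0 := fun i hyi hei ↦ hyi <| by
    rw [hy, ofLp_toEuclideanCLM, mulVec_diagonal, hei, zero_mul]
  have hnorm_dy : ‖toEuclideanCLM (𝕜 := 𝕜) (U * (diagonal d * diagonal e) * star U) x‖ =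
      ‖toEuclideanCLM (𝕜 := 𝕜) (diagonal d) y‖ := by
    rw [norm_toEuclideanCLM_unitary_conj hU, map_mul]
    rfl
  rw [hnorm_y, hprod, hnorm_dy]
  exact mul_norm_lt_norm_toEuclideanCLM_diagonal hy_ne fun i hyi ↦ h i (hy_supp i hyi)

theorem stmt16_general {η : ℝ} {A B : Matrix ι ι 𝕜}
    (hnorm : ‖toEuclideanCLM (𝕜 := 𝕜) (A - B)‖ ≤ η)
    {U : Matrix ι ι 𝕜} (hU : U ∈ unitaryGroup ι 𝕜) {lam : ι → ℝ}
    (hdecomp : A - (η : 𝕜) • 1 = U * diagonal (fun i ↦ (lam i : 𝕜)) * star U) :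
    (U * diagonal (fun i ↦ ((max (lam i) 0 : ℝ) : 𝕜)) * star U).rank ≤ B.rank := by
  have hA : A = U * diagonal (fun i ↦ ((lam i + η : ℝ) : 𝕜)) * star U := by
    have hdiag : diagonal (fun i ↦ ((lam i + η : ℝ) : 𝕜)) =
        diagonal (fun i ↦ (lam i : 𝕜)) + (η : 𝕜) • (1 : Matrix ι ι 𝕜) := by
      simp only [RCLike.ofReal_add, ← diagonal_add, smul_one_eq_diagonal]
    rw [hdiag, Matrix.mul_add, Matrix.add_mul, ← hdecomp, Matrix.mul_smul, Matrix.smul_mul,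
      Matrix.mul_one, mem_unitaryGroup_iff.1 hU, sub_add_cancel]
  refine rank_unitary_conj_diagonal_le_rank hU (d := fun i ↦ ((lam i + η : ℝ) : 𝕜)) ?_
  intro i hi
  have hlam : 0 < lam i := by
    by_contra! hle
    exact hi (by rw [max_eq_right hle, RCLike.ofReal_zero])
  calc ‖toEuclideanCLM (𝕜 := 𝕜) (U * diagonal (fun i ↦ ((lam i + η : ℝ) : 𝕜)) * star U - B)‖
      ≤ η := hA ▸ hnorm
    _ < lam i + η := lt_add_of_pos_left η hlam
    _ ≤ ‖((lam i + η : ℝ) : 𝕜)‖ := RCLike.norm_ofReal (K := 𝕜) _ ▸ le_abs_self _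

end Matrix

/-- If `A, B ∈ M_n(ℂ)` are positive semidefinite with `‖A - B‖ < η` in the
operator norm (realized via the action on Euclidean space), then the positive part
`(A - η·1)₊`, computed via any spectral decomposition `A - η·1 = U diag(λ) U*` with `U`
unitary by applying `t ↦ max t 0` to the eigenvalues, satisfies
`rank((A - η·1)₊) ≤ rank(B)`. -/
theorem stmt16 (n : ℕ) (hn : 0 < n) (η : ℝ) (hη : 0 < η)
    (A B : Matrix (Fin n) (Fin n) ℂ) (hA : A.PosSemidef) (hB : B.PosSemidef)
    (hnorm : ‖Matrix.toEuclideanCLM (𝕜 := ℂ) (A - B)‖ < η)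
    (U : Matrix (Fin n) (Fin n) ℂ) (hU : U ∈ Matrix.unitaryGroup (Fin n) ℂ)
    (lam : Fin n → ℝ)
    (hdecomp : A - (η : ℂ) • 1 = U * Matrix.diagonal (fun i => (lam i : ℂ)) * star U) :
    (U * Matrix.diagonal (fun i => (↑(max (lam i) 0) : ℂ)) * star U).rank ≤ B.rank :=
  stmt16_general hnorm.le hU hdecomp
end
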